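/- Let α > 0, ε = (ε1,…,εM) ∈ (0,1)^M, and let P = (P1,…,PM) be a tuple of distinct distributions on a finite alphabet X such that for each j ∈ [M] the minimizer i*(j) := argmin_{i∈[M], i≠j} GJS(P_i,P_j,α) is unique and V(P_{i*(j)},P_j,α) > 0. Let J1 := argmin_{j∈[M]} GJS(P_{i*(j)},P_j,α) and J2 := argmin_{j∈J1} sqrt(V(P_{i*(j)},P_j,α))·Φ^{-1}(ε_j). Then for any j ∈ J2, there exist C > 0 and n0 such that for all n ≥ n0, | λ*(n,α,ε|P) − GJS(P_{i*(j)},P_j,α) − sqrt(V(P_{i*(j)},P_j,α)/n)·Φ^{-1}(ε_j) | ≤ C·(log n)/n. -/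

import Mathlib

open Filter Topology MeasureTheory

namespace Classification

variable {X : Type*} [Fintype X] [DecidableEq X]

/-- `P` is a probability mass function on the finite alphabet `X`. -/
def IsDist (P : X → ℝ) : Prop := (∀ x, 0 ≤ P x) ∧ ∑ x, P x = 1

/-- `P` has full support. -/
def FullSupport (P : X → ℝ) : Prop := ∀ x, 0 < P x

/-- Empirical distribution (type) of a sequence `x : Fin m → X`. -/
noncomputable def empDist {m : ℕ} (x : Fin m → X) : X → ℝ :=
  fun a => ((Finset.univ.filter fun i => x i = a).card : ℝ) / m

/-- Real-valued KL divergence with the usual `0 · log 0 = 0` convention. -/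
noncomputable def klDivR (Q P : X → ℝ) : ℝ := ∑ x, Q x * Real.log (Q x / P x)

open Classical in
/-- Extended-real-valued KL divergence: `⊤` when `Q` is not absolutely continuous w.r.t. `P`. -/
noncomputable def klDivE (Q P : X → ℝ) : EReal :=
  if ∀ x, P x = 0 → Q x = 0 then ((klDivR Q P : ℝ) : EReal) else ⊤

/-- The mixture `(α P1 + P2) / (1 + α)`. -/
noncomputable def mix (P1 P2 : X → ℝ) (α : ℝ) : X → ℝ :=
  fun x => (α * P1 x + P2 x) / (1 + α)

/-- Generalized Jensen–Shannon divergence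
`GJS(P1,P2,α) = α D(P1 ‖ (αP1+P2)/(1+α)) + D(P2 ‖ (αP1+P2)/(1+α))`. -/
noncomputable def GJS (P1 P2 : X → ℝ) (α : ℝ) : ℝ :=
  α * klDivR P1 (mix P1 P2 α) + klDivR P2 (mix P1 P2 α)

/-- Training sequence length `N = ⌈α n⌉`. -/
noncomputable def trainLen (α : ℝ) (n : ℕ) : ℕ := ⌈α * (n : ℝ)⌉₊

/-- Probability of observing the sequence `x` under i.i.d. sampling from `P`. -/
noncomputable def seqProb (P : X → ℝ) {m : ℕ} (x : Fin m → X) : ℝ := ∏ i, P (x i)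

/-- A binary classification test: output `true` means "declare H₂",
`false` means "declare H₁". -/
abbrev BTest (X : Type*) (α : ℝ) (n : ℕ) : Type _ :=
  (Fin (trainLen α n) → X) → (Fin (trainLen α n) → X) → (Fin n → X) → Bool

/-- Type-I error probability: probability of declaring `H₂` when `Y^n ~ P1` (hypothesis H₁). -/
noncomputable def beta1 {α : ℝ} {n : ℕ} (φ : BTest X α n) (P1 P2 : X → ℝ) : ℝ :=
  ∑ x1 : Fin (trainLen α n) → X, ∑ x2 : Fin (trainLen α n) → X, ∑ y : Fin n → X,
    if φ x1 x2 y = true then seqProb P1 x1 * seqProb P2 x2 * seqProb P1 y else 0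

/-- Type-II error probability: probability of declaring `H₁` when `Y^n ~ P2` (hypothesis H₂). -/
noncomputable def beta2 {α : ℝ} {n : ℕ} (φ : BTest X α n) (P1 P2 : X → ℝ) : ℝ :=
  ∑ x1 : Fin (trainLen α n) → X, ∑ x2 : Fin (trainLen α n) → X, ∑ y : Fin n → X,
    if φ x1 x2 y = false then seqProb P1 x1 * seqProb P2 x2 * seqProb P2 y else 0

open Classical in
/-- Gutman's test with threshold `lam`: declare `H₁` iff `GJS(T̂_{x₁}, T̂_y, α) ≤ lam`. -/
noncomputable def gutman (α lam : ℝ) (n : ℕ) : BTest X α n :=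
  fun x1 _ y => if GJS (empDist x1) (empDist y) α ≤ lam then false else true

open Classical in
/-- `- log x` as an extended real, with `⊤` at `x = 0`. -/
noncomputable def negLogE (x : ℝ) : EReal :=
  if x = 0 then ⊤ else ((-Real.log x : ℝ) : EReal)

/-- Gutman's exponent function
`F(P1,P2,α,lam) = min { α D(Q1‖P1) + D(Q2‖P2) : GJS(Q1,Q2,α) ≤ lam }` (as an inf in `EReal`). -/
noncomputable def Fexp (P1 P2 : X → ℝ) (α lam : ℝ) : EReal :=
  sInf {v : EReal | ∃ Q1 Q2 : X → ℝ, IsDist Q1 ∧ IsDist Q2 ∧ GJS Q1 Q2 α ≤ lam ∧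
    v = (α : EReal) * klDivE Q1 P1 + klDivE Q2 P2}

/-- Expectation of `f` under `P`. -/
noncomputable def expect (P : X → ℝ) (f : X → ℝ) : ℝ := ∑ x, P x * f x

/-- Variance of `f` under `P`. -/
noncomputable def varD (P : X → ℝ) (f : X → ℝ) : ℝ :=
  expect P (fun x => (f x - expect P f) ^ 2)

/-- Information density `ı₁(x) = log((1+α) P1(x) / (α P1(x) + P2(x)))`. -/
noncomputable def iDens1 (P1 P2 : X → ℝ) (α : ℝ) (x : X) : ℝ :=
  Real.log ((1 + α) * P1 x / (α * P1 x + P2 x))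

/-- Information density `ı₂(x) = log((1+α) P2(x) / (α P1(x) + P2(x)))`. -/
noncomputable def iDens2 (P1 P2 : X → ℝ) (α : ℝ) (x : X) : ℝ :=
  Real.log ((1 + α) * P2 x / (α * P1 x + P2 x))

/-- The dispersion `V(P1,P2,α) = α Var_{P1}[ı₁] + Var_{P2}[ı₂]`. -/
noncomputable def disp (P1 P2 : X → ℝ) (α : ℝ) : ℝ :=
  α * varD P1 (iDens1 P1 P2 α) + varD P2 (iDens2 P1 P2 α)

/-- The standard Gaussian cumulative distribution function `Φ`. -/
noncomputable def stdCDF (x : ℝ) : ℝ :=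
  (Real.sqrt (2 * Real.pi))⁻¹ * ∫ t in Set.Iic x, Real.exp (-t ^ 2 / 2)

/-- The inverse standard Gaussian cdf `Φ⁻¹`. -/
noncomputable def stdCDFInv (p : ℝ) : ℝ := sInf {x : ℝ | p ≤ stdCDF x}

/-- The non-asymptotic fundamental limit `λ*(n, α, ε | P1, P2)` for binary classification. -/
noncomputable def lamStar (α : ℝ) (n : ℕ) (ε : ℝ) (P1 P2 : X → ℝ) : ℝ :=
  sSup {lam : ℝ | 0 ≤ lam ∧ ∃ φ : BTest X α n,
    (∀ Q1 Q2 : X → ℝ, IsDist Q1 → IsDist Q2 →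
      beta1 φ Q1 Q2 ≤ Real.exp (-((n : ℝ) * lam))) ∧
    beta2 φ P1 P2 ≤ ε}

/-- Rényi divergence of order `γ`. -/
noncomputable def renyi (γ : ℝ) (P1 P2 : X → ℝ) : ℝ :=
  (1 / (γ - 1)) * Real.log (∑ x, P1 x ^ γ * P2 x ^ (1 - γ))

/-- The fundamental limit `τ*(n, α, ε | φ_n^Gut, P1, P2)` in the dual setting for Gutman's test. -/
noncomputable def tauStarGut (α : ℝ) (n : ℕ) (ε : ℝ) (P1 P2 : X → ℝ) : ℝ :=
  sSup {τ : ℝ | 0 ≤ τ ∧ ∃ lam : ℝ, 0 ≤ lam ∧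
    (∀ Q1 Q2 : X → ℝ, IsDist Q1 → IsDist Q2 →
      beta1 (gutman α lam n) Q1 Q2 ≤ ε) ∧
    beta2 (gutman α lam n) P1 P2 ≤ Real.exp (-((n : ℝ) * τ))}

/-- A two-sample homogeneity test: `true` means "declare H₂" (different distributions). -/
abbrev TTest (X : Type*) (α : ℝ) (n : ℕ) : Type _ :=
  (Fin (trainLen α n) → X) → (Fin n → X) → Bool

/-- False-alarm probability of a two-sample test. -/
noncomputable def betaFA {α : ℝ} {n : ℕ} (φ : TTest X α n) (P1 : X → ℝ) : ℝ :=
  ∑ x : Fin (trainLen α n) → X, ∑ y : Fin n → X,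
    if φ x y = true then seqProb P1 x * seqProb P1 y else 0

/-- Miss-detection probability of a two-sample test. -/
noncomputable def betaMD {α : ℝ} {n : ℕ} (φ : TTest X α n) (P1 P2 : X → ℝ) : ℝ :=
  ∑ x : Fin (trainLen α n) → X, ∑ y : Fin n → X,
    if φ x y = false then seqProb P1 x * seqProb P2 y else 0

/-- The fundamental limit `ξ*(n, α, ε | P1, P2)` for two-sample homogeneity testing. -/
noncomputable def xiStar (α : ℝ) (n : ℕ) (ε : ℝ) (P1 P2 : X → ℝ) : ℝ :=
  sSup {lam : ℝ | 0 ≤ lam ∧ ∃ φ : TTest X α n,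
    (∀ Q1 : X → ℝ, IsDist Q1 → betaFA φ Q1 ≤ Real.exp (-((n : ℝ) * lam))) ∧
    betaMD φ P1 P2 ≤ ε}

/-- An M-ary classification test with the rejection option: `some j` means "declare H_j",
`none` means "reject". -/
abbrev MTest (X : Type*) (M : ℕ) (α : ℝ) (n : ℕ) : Type _ :=
  (Fin M → Fin (trainLen α n) → X) → (Fin n → X) → Option (Fin M)

/-- Type-`j` error probability: probability of declaring some hypothesis other than
`H_j` or rejection, under `H_j`. -/
noncomputable def betaM {M : ℕ} {α : ℝ} {n : ℕ} (ψ : MTest X M α n)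
    (P : Fin M → X → ℝ) (j : Fin M) : ℝ :=
  ∑ xs : Fin M → Fin (trainLen α n) → X, ∑ y : Fin n → X,
    if ψ xs y ≠ some j ∧ ψ xs y ≠ none then
      (∏ i, seqProb (P i) (xs i)) * seqProb (P j) y else 0

/-- Type-`j` rejection probability: probability of rejecting under `H_j`. -/
noncomputable def zetaM {M : ℕ} {α : ℝ} {n : ℕ} (ψ : MTest X M α n)
    (P : Fin M → X → ℝ) (j : Fin M) : ℝ :=
  ∑ xs : Fin M → Fin (trainLen α n) → X, ∑ y : Fin n → X,
    if ψ xs y = none then (∏ i, seqProb (P i) (xs i)) * seqProb (P j) y else 0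

/-- The fundamental limit `λ*(n, α, ε | P)` for M-ary classification with rejection. -/
noncomputable def lamStarM (M : ℕ) (α : ℝ) (n : ℕ) (ε : Fin M → ℝ)
    (P : Fin M → X → ℝ) : ℝ :=
  sSup {lam : ℝ | 0 ≤ lam ∧ ∃ ψ : MTest X M α n,
    (∀ Q : Fin M → X → ℝ, (∀ i, IsDist (Q i)) → ∀ j,
      betaM ψ Q j ≤ Real.exp (-((n : ℝ) * lam))) ∧
    (∀ j, zetaM ψ P j ≤ ε j)}

open Classical in
/-- Gutman's M-ary test with rejection and threshold `lam`. -/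
noncomputable def gutmanM (M : ℕ) [NeZero M] (α lam : ℝ) (n : ℕ) : MTest X M α n :=
  fun xs y =>
    if ∃ i k : Fin M, i ≠ k ∧ GJS (empDist (xs i)) (empDist y) α ≤ lam ∧
        GJS (empDist (xs k)) (empDist y) α ≤ lam then none
    else if h : ∃ j : Fin M, GJS (empDist (xs j)) (empDist y) α ≤ lam then some h.choose
    else some 0

/-- The fundamental limit `τ*(n, α, ε | Ψ_n^Gut, P)` in the dual setting for
Gutman's M-ary test. -/
noncomputable def tauStarGutM (M : ℕ) [NeZero M] (α : ℝ) (n : ℕ) (ε : ℝ)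
    (P : Fin M → X → ℝ) : ℝ :=
  sSup {τ : ℝ | 0 ≤ τ ∧ ∃ lam : ℝ, 0 ≤ lam ∧
    (∀ Q : Fin M → X → ℝ, (∀ i, IsDist (Q i)) → ∀ j,
      betaM (gutmanM M α lam n) Q j ≤ ε) ∧
    (∀ j, zetaM (gutmanM M α lam n) P j ≤ Real.exp (-((n : ℝ) * τ)))}

/-- Generalized divergence of three distributions
`D_γ(P1,P2,P3) = (γ-1)⁻¹ log Σ_x P1(x)^{1-γ} P2(x)^{γ/2} P3(x)^{γ/2}`. -/
noncomputable def genDiv (γ : ℝ) (P1 P2 P3 : X → ℝ) : ℝ :=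
  (1 / (γ - 1)) * Real.log (∑ x, P1 x ^ (1 - γ) * P2 x ^ (γ / 2) * P3 x ^ (γ / 2))

/-- A binary classification test with the rejection option: `some 0` means "declare H₁",
`some 1` means "declare H₂", `none` means "reject". -/
abbrev RTest (X : Type*) (α : ℝ) (n : ℕ) : Type _ :=
  (Fin (trainLen α n) → X) → (Fin (trainLen α n) → X) → (Fin n → X) → Option (Fin 2)

/-- Type-1 error probability of a rejection test: declare `H₂` under `H₁`. -/
noncomputable def beta1R {α : ℝ} {n : ℕ} (ψ : RTest X α n) (P1 P2 : X → ℝ) : ℝ :=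
  ∑ x1 : Fin (trainLen α n) → X, ∑ x2 : Fin (trainLen α n) → X, ∑ y : Fin n → X,
    if ψ x1 x2 y = some 1 then seqProb P1 x1 * seqProb P2 x2 * seqProb P1 y else 0

/-- Type-2 error probability of a rejection test: declare `H₁` under `H₂`. -/
noncomputable def beta2R {α : ℝ} {n : ℕ} (ψ : RTest X α n) (P1 P2 : X → ℝ) : ℝ :=
  ∑ x1 : Fin (trainLen α n) → X, ∑ x2 : Fin (trainLen α n) → X, ∑ y : Fin n → X,
    if ψ x1 x2 y = some 0 then seqProb P1 x1 * seqProb P2 x2 * seqProb P2 y else 0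

open Classical in
/-- Type-`j` rejection probability of a binary rejection test. -/
noncomputable def zetaR {α : ℝ} {n : ℕ} (ψ : RTest X α n) (P1 P2 : X → ℝ) (j : Fin 2) : ℝ :=
  ∑ x1 : Fin (trainLen α n) → X, ∑ x2 : Fin (trainLen α n) → X, ∑ y : Fin n → X,
    if ψ x1 x2 y = none then
      seqProb P1 x1 * seqProb P2 x2 * seqProb (if j = 0 then P1 else P2) y else 0

/-- A binary test is type-based if it depends on the data only through the
triple of empirical distributions. -/
def TypeBasedB {α : ℝ} {n : ℕ} (φ : BTest X α n) : Prop :=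
  ∀ x1 x1' x2 x2' : Fin (trainLen α n) → X, ∀ y y' : Fin n → X,
    empDist x1 = empDist x1' → empDist x2 = empDist x2' → empDist y = empDist y' →
      φ x1 x2 y = φ x1' x2' y'

/-- An M-ary test is type-based if it depends on the data only through the
tuple of empirical distributions. -/
def TypeBasedM {M : ℕ} {α : ℝ} {n : ℕ} (ψ : MTest X M α n) : Prop :=
  ∀ xs xs' : Fin M → Fin (trainLen α n) → X, ∀ y y' : Fin n → X,
    (∀ i, empDist (xs i) = empDist (xs' i)) → empDist y = empDist y' →
      ψ xs y = ψ xs' y'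

open Classical in
/-- Probability of an event under hypothesis `H₂` in the binary setup. -/
noncomputable def prH2E (α : ℝ) (n : ℕ) (P1 P2 : X → ℝ)
    (E : (Fin (trainLen α n) → X) → (Fin (trainLen α n) → X) → (Fin n → X) → Prop) : ℝ :=
  ∑ x1 : Fin (trainLen α n) → X, ∑ x2 : Fin (trainLen α n) → X, ∑ y : Fin n → X,
    if E x1 x2 y then seqProb P1 x1 * seqProb P2 x2 * seqProb P2 y else 0

open Classical in
/-- Probability of an event under hypothesis `H_j` in the M-ary setup. -/
noncomputable def prHjM (M : ℕ) (α : ℝ) (n : ℕ) (P : Fin M → X → ℝ) (j : Fin M)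
    (E : (Fin M → Fin (trainLen α n) → X) → (Fin n → X) → Prop) : ℝ :=
  ∑ xs : Fin M → Fin (trainLen α n) → X, ∑ y : Fin n → X,
    if E xs y then (∏ i, seqProb (P i) (xs i)) * seqProb (P j) y else 0

/-- `η_n(α) = |X| log(n+1)/n + 2|X| log(1+αn)/(αn)`. -/
noncomputable def etaN (X : Type*) [Fintype X] (α : ℝ) (n : ℕ) : ℝ :=
  (Fintype.card X : ℝ) * Real.log ((n : ℝ) + 1) / n +
    2 * (Fintype.card X : ℝ) * Real.log (1 + α * n) / (α * n)

/-- `η_{n,M} = M |X| log(nα+1)/(nα) + |X| log(n+1)/n`. -/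
noncomputable def etaNM (X : Type*) [Fintype X] (M : ℕ) (α : ℝ) (n : ℕ) : ℝ :=
  (M : ℝ) * (Fintype.card X : ℝ) * Real.log ((n : ℝ) * α + 1) / ((n : ℝ) * α) +
    (Fintype.card X : ℝ) * Real.log ((n : ℝ) + 1) / n

/-- `Q` is an `m`-type: the empirical distribution of some sequence of length `m`. -/
def IsTypeDist (m : ℕ) (Q : X → ℝ) : Prop := ∃ x : Fin m → X, empDist x = Q

/-- The type-restricted exponent function `F_n`. -/
noncomputable def Fn (n : ℕ) (P1 P2 : X → ℝ) (α lam : ℝ) : ℝ :=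
  sInf {v : ℝ | ∃ Q1 Q2 : X → ℝ, IsTypeDist (trainLen α n) Q1 ∧ IsTypeDist n Q2 ∧
    GJS Q1 Q2 α ≤ lam ∧ v = α * klDivR Q1 P1 + klDivR Q2 P2}

/-- The second smallest value of a finite family of reals:
`min_{i ≠ j} max (v i) (v j)`. -/
noncomputable def secondMin {M : ℕ} (v : Fin M → ℝ) : ℝ :=
  sInf {t : ℝ | ∃ i j : Fin M, i ≠ j ∧ t = max (v i) (v j)}

/-- The tilted distribution `P^{(γ)}` with `γ = α/(1+α)`. -/
noncomputable def tilt (α : ℝ) (P1 P2 : X → ℝ) : X → ℝ :=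
  fun x => P1 x ^ (α / (1 + α)) * P2 x ^ (1 / (1 + α)) /
    ∑ a, P1 a ^ (α / (1 + α)) * P2 a ^ (1 / (1 + α))



set_option linter.unusedSectionVars false

/-! ### Gaussian facts -/

noncomputable def gI (x : ℝ) : ℝ := ∫ t in Set.Iic x, Real.exp (-t ^ 2 / 2)

lemma gauss_integrable : Integrable (fun t : ℝ => Real.exp (-t ^ 2 / 2)) := by
  have := integrable_exp_neg_mul_sq (b := 1/2) (by norm_num)
  refine this.congr (ae_of_all _ fun t => ?_)
  simp only; congr 1; ring

lemma gauss_total : ∫ t : ℝ, Real.exp (-t ^ 2 / 2) = Real.sqrt (2 * Real.pi) := by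
  have := integral_gaussian (1/2)
  rw [show Real.pi / (1/2) = 2 * Real.pi by ring] at this
  rw [← this]; congr 1; ext t; congr 1; ring

lemma gI_eq (x : ℝ) : gI x = gI 0 + ∫ t in (0:ℝ)..x, Real.exp (-t ^ 2 / 2) := by
  have := intervalIntegral.integral_Iic_sub_Iic (f := fun t : ℝ => Real.exp (-t ^ 2 / 2))
    (a := 0) (b := x) (μ := volume) gauss_integrable.integrableOn gauss_integrable.integrableOn
  unfold gI; linarith

lemma gI_hasDeriv (x : ℝ) : HasDerivAt gI (Real.exp (-x ^ 2 / 2)) x := by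
  have hc : Continuous (fun t : ℝ => Real.exp (-t ^ 2 / 2)) := by fun_prop
  have h := (hc.integral_hasStrictDerivAt 0 x).hasDerivAt.const_add (gI 0)
  have e : gI = fun x => gI 0 + ∫ t in (0:ℝ)..x, Real.exp (-t ^ 2 / 2) := funext gI_eq
  rw [e]; simpa using h

lemma gI_nonneg (x : ℝ) : 0 ≤ gI x :=
  setIntegral_nonneg measurableSet_Iic fun _ _ => (Real.exp_pos _).le

lemma gI_mono : Monotone gI := by
  apply monotone_of_deriv_nonneg
  · exact fun x => (gI_hasDeriv x).differentiableAt
  · intro x; rw [(gI_hasDeriv x).deriv]; exact (Real.exp_pos _).le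

lemma gI_neg (x : ℝ) : gI (-x) + gI x = Real.sqrt (2 * Real.pi) := by
  have h1 : gI (-x) = ∫ t in Set.Ioi x, Real.exp (-t ^ 2 / 2) := by
    unfold gI
    rw [← integral_comp_neg_Ioi]
    simp
  rw [h1, ← gauss_total, add_comm]
  unfold gI
  exact intervalIntegral.integral_Iic_add_Ioi gauss_integrable.integrableOn
    gauss_integrable.integrableOn

lemma gI_mills (x : ℝ) : -x * gI x ≤ Real.exp (-x ^ 2 / 2) := by
  have hd : ∀ t : ℝ, HasDerivAt (fun t : ℝ => Real.exp (-t ^ 2 / 2))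
      (-t * Real.exp (-t ^ 2 / 2)) t := by
    intro t
    have : HasDerivAt (fun t : ℝ => -t ^ 2 / 2) (-t) t := by
      have := ((hasDerivAt_id t).pow 2).neg.div_const 2
      exact this.congr_deriv (by simp; ring)
    exact this.exp.congr_deriv (by ring)
  have hi : Integrable (fun t : ℝ => -t * Real.exp (-t ^ 2 / 2)) := by
    have := (integrable_mul_exp_neg_mul_sq (b := 1/2) (by norm_num)).neg
    refine this.congr (ae_of_all _ fun t => ?_)
    simp only [Pi.neg_apply, neg_mul]; congr 3; ring
  have ht : Tendsto (fun t : ℝ => Real.exp (-t ^ 2 / 2)) atBot (𝓝 0) := by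
    apply Real.tendsto_exp_atBot.comp
    have h1 : Tendsto (fun t : ℝ => t ^ 2) atBot atTop := by
      have := (tendsto_pow_atTop (α := ℝ) (n := 2) (by norm_num)).comp tendsto_neg_atBot_atTop
      refine this.congr fun t => ?_
      simp
    have := (tendsto_neg_atTop_atBot.comp h1).atBot_div_const (show (0:ℝ) < 2 by norm_num)
    exact this
  have key := integral_Iic_of_hasDerivAt_of_tendsto' (a := x) (m := 0)
    (fun t _ => hd t) hi.integrableOn ht
  rw [sub_zero] at key
  rw [← key]
  unfold gI
  rw [← integral_const_mul]
  apply setIntegral_mono_on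
  · exact (gauss_integrable.const_mul _).integrableOn
  · exact hi.integrableOn
  · exact measurableSet_Iic
  · intro t ht
    have : t ≤ x := ht
    exact mul_le_mul_of_nonneg_right (by linarith) (Real.exp_pos _).le

lemma sqrt2pi_pos : 0 < Real.sqrt (2 * Real.pi) := Real.sqrt_pos.2 (by positivity)

lemma stdCDF_eq (x : ℝ) : stdCDF x = (Real.sqrt (2 * Real.pi))⁻¹ * gI x := rfl

lemma gI_eq_std (x : ℝ) : gI x = Real.sqrt (2 * Real.pi) * stdCDF x := by
  rw [stdCDF_eq]; field_simp [sqrt2pi_pos.ne']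

lemma stdCDF_hasDeriv (x : ℝ) :
    HasDerivAt stdCDF ((Real.sqrt (2 * Real.pi))⁻¹ * Real.exp (-x ^ 2 / 2)) x :=
  (gI_hasDeriv x).const_mul _

lemma stdCDF_cont : Continuous stdCDF :=
  continuous_iff_continuousAt.2 fun x => (stdCDF_hasDeriv x).continuousAt

lemma stdCDF_nonneg (x : ℝ) : 0 ≤ stdCDF x :=
  mul_nonneg (inv_nonneg.2 sqrt2pi_pos.le) (gI_nonneg x)

lemma stdCDF_neg (x : ℝ) : stdCDF (-x) + stdCDF x = 1 := by
  rw [stdCDF_eq, stdCDF_eq, ← mul_add, gI_neg, inv_mul_cancel₀ sqrt2pi_pos.ne']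

lemma stdCDF_le_one (x : ℝ) : stdCDF x ≤ 1 := by
  have := stdCDF_neg x; have := stdCDF_nonneg (-x); linarith

lemma stdCDF_strictMono : StrictMono stdCDF := by
  apply strictMono_of_deriv_pos
  intro x; rw [(stdCDF_hasDeriv x).deriv]
  have := sqrt2pi_pos
  positivity

lemma stdCDF_lip {a b : ℝ} (h : a ≤ b) : stdCDF b - stdCDF a ≤ b - a := by
  have := Convex.image_sub_le_mul_sub_of_deriv_le (D := Set.univ) convex_univ (f := stdCDF)
    stdCDF_cont.continuousOn (fun x _ => (stdCDF_hasDeriv x).differentiableAt.differentiableWithinAt)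
    (C := 1) ?_ a trivial b trivial h
  · linarith
  · intro x _
    rw [(stdCDF_hasDeriv x).deriv]
    have h1 : Real.exp (-x ^ 2 / 2) ≤ 1 := Real.exp_le_one_iff.2 (by nlinarith [sq_nonneg x])
    have h2 : (Real.sqrt (2 * Real.pi))⁻¹ ≤ 1 := by
      apply inv_le_one_of_one_le₀
      rw [Real.one_le_sqrt]; nlinarith [Real.pi_gt_three]
    have := Real.exp_pos (-x ^ 2 / 2)
    have := sqrt2pi_pos
    calc _ ≤ (1:ℝ) * 1 := by gcongr
      _ = 1 := by norm_num

/-- local lower bound of the increments -/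
lemma stdCDF_lower (b : ℝ) : ∃ c > 0, ∀ x y, b - 1 ≤ x → x ≤ y → y ≤ b + 1 →
    c * (y - x) ≤ stdCDF y - stdCDF x := by
  refine ⟨(Real.sqrt (2 * Real.pi))⁻¹ * Real.exp (-(|b| + 1) ^ 2 / 2), ?_, ?_⟩
  · have := sqrt2pi_pos
    positivity
  · intro x y hx hxy hy
    apply Convex.mul_sub_le_image_sub_of_le_deriv (D := Set.Icc (b-1) (b+1)) (convex_Icc _ _)
      stdCDF_cont.continuousOn (fun x _ => (stdCDF_hasDeriv x).differentiableAt.differentiableWithinAt)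
      _ x ⟨hx, by linarith⟩ y ⟨by linarith, hy⟩ hxy
    intro t ht
    rw [interior_Icc] at ht
    rw [(stdCDF_hasDeriv t).deriv]
    have := sqrt2pi_pos
    gcongr ?_ * Real.exp ?_
    have h1 : |t| ≤ |b| + 1 := by
      rw [abs_le]
      constructor
      · linarith [neg_abs_le b, ht.1]
      · linarith [le_abs_self b, ht.2]
    have h2 : t ^ 2 ≤ (|b| + 1) ^ 2 := by
      rw [← sq_abs t]; gcongr
    linarith

lemma gI_tendsto : Tendsto gI atTop (𝓝 (Real.sqrt (2 * Real.pi))) := by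
  have hc : Tendsto (fun b : ℝ => ∫ t in (0:ℝ)..b, Real.exp (-t ^ 2 / 2)) atTop
    (𝓝 (∫ t in Set.Ioi (0:ℝ), Real.exp (-t ^ 2 / 2))) :=
    intervalIntegral_tendsto_integral_Ioi 0 gauss_integrable.integrableOn tendsto_id
  have := hc.const_add (gI 0)
  rw [← gauss_total, ← intervalIntegral.integral_Iic_add_Ioi (b := 0) gauss_integrable.integrableOn
    gauss_integrable.integrableOn]
  exact this.congr fun x => (gI_eq x).symm

lemma stdCDF_tendsto_one : Tendsto stdCDF atTop (𝓝 1) := by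
  have := gI_tendsto.const_mul (Real.sqrt (2 * Real.pi))⁻¹
  rwa [inv_mul_cancel₀ sqrt2pi_pos.ne'] at this

lemma stdCDF_surj {p : ℝ} (hp : p ∈ Set.Ioo (0:ℝ) 1) : ∃ x, stdCDF x = p := by
  obtain ⟨x1, h1⟩ := (stdCDF_tendsto_one.eventually (lt_mem_nhds hp.2)).exists
  obtain ⟨x2, h2⟩ := (stdCDF_tendsto_one.eventually
    (lt_mem_nhds (show 1 - p < 1 by linarith [hp.1]))).exists
  have h3 : stdCDF (-x2) < p := by have := stdCDF_neg x2; linarith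
  have hle : -x2 ≤ x1 := by
    by_contra h
    have := stdCDF_strictMono (not_le.1 h); linarith
  obtain ⟨x, -, hx⟩ := intermediate_value_Icc hle stdCDF_cont.continuousOn ⟨h3.le, h1.le⟩
  exact ⟨x, hx⟩

lemma stdCDF_inv {p : ℝ} (hp : p ∈ Set.Ioo (0:ℝ) 1) : stdCDF (stdCDFInv p) = p := by
  obtain ⟨x, rfl⟩ := stdCDF_surj hp
  have : {y : ℝ | stdCDF x ≤ stdCDF y} = Set.Ici x := by
    ext y; simp [stdCDF_strictMono.le_iff_le]
  unfold stdCDFInv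
  rw [this, csInf_Ici]

/-! ### Stein's equation -/

noncomputable def sR (w : ℝ) : ℝ := Real.exp (w ^ 2 / 2) * gI w

lemma exp_mul_neg (w : ℝ) : Real.exp (w ^ 2 / 2) * Real.exp (-w ^ 2 / 2) = 1 := by
  rw [← Real.exp_add]; simp; ring

lemma sR_hasDeriv (w : ℝ) : HasDerivAt sR (w * sR w + 1) w := by
  have h1 : HasDerivAt (fun t : ℝ => t ^ 2 / 2) w w := by
    have := ((hasDerivAt_id w).pow 2).div_const 2
    exact this.congr_deriv (by simp)
  have := h1.exp.mul (gI_hasDeriv w)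
  refine HasDerivAt.congr_deriv (f := sR) this ?_
  rw [exp_mul_neg]; unfold sR; ring

lemma sR_nonneg (w : ℝ) : 0 ≤ sR w := mul_nonneg (Real.exp_pos _).le (gI_nonneg _)

lemma sR_mills (w : ℝ) : -w * sR w ≤ 1 := by
  have := mul_le_mul_of_nonneg_left (gI_mills w) (Real.exp_pos (w ^ 2 / 2)).le
  rw [exp_mul_neg] at this
  unfold sR; linarith

lemma sR_cont : Continuous sR :=
  continuous_iff_continuousAt.2 fun x => (sR_hasDeriv x).continuousAt

lemma sR_mono : MonotoneOn sR (Set.Iic 0) := by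
  apply monotoneOn_of_deriv_nonneg (convex_Iic _) sR_cont.continuousOn
  · exact fun x _ => (sR_hasDeriv x).differentiableAt.differentiableWithinAt
  · intro x _; rw [(sR_hasDeriv x).deriv]; linarith [sR_mills x]

lemma sR_le {w : ℝ} (h : w ≤ 0) : sR w ≤ 3 := by
  refine (sR_mono h (Set.mem_Iic.2 le_rfl) h).trans ?_
  have h0 : gI 0 ≤ Real.sqrt (2 * Real.pi) := by
    have := gI_neg 0; have := gI_nonneg (-0); linarith
  have : Real.sqrt (2 * Real.pi) ≤ 3 := by
    rw [Real.sqrt_le_left (by norm_num)]; nlinarith [Real.pi_lt_d2]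
  simp [sR]; linarith

/-- Stein's solution. -/
noncomputable def sF (z w : ℝ) : ℝ :=
  if w ≤ z then sR w * (1 - stdCDF z) else sR (-w) * stdCDF z

lemma sR_swap (w : ℝ) : sR w * (1 - stdCDF w) = sR (-w) * stdCDF w := by
  have : 1 - stdCDF w = stdCDF (-w) := by have := stdCDF_neg w; linarith
  rw [this]; unfold sR; rw [gI_eq_std, gI_eq_std]; simp; ring

lemma sF_cont (z : ℝ) : Continuous (sF z) := by
  unfold sF
  apply Continuous.if_le
  · exact sR_cont.mul continuous_const
  · exact (sR_cont.comp continuous_neg).mul continuous_const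
  · exact continuous_id
  · exact continuous_const
  · rintro x rfl; exact sR_swap x

lemma sF_nonneg (z w : ℝ) : 0 ≤ sF z w := by
  unfold sF
  have := stdCDF_nonneg z; have := stdCDF_le_one z
  split_ifs
  · exact mul_nonneg (sR_nonneg _) (by linarith)
  · exact mul_nonneg (sR_nonneg _) (by linarith)

lemma sF_le_neg_abs (z w : ℝ) : sF z w ≤ sR (-|w|) := by
  have h0 := stdCDF_nonneg z; have h1 := stdCDF_le_one z
  have h0' := stdCDF_nonneg w; have h1' := stdCDF_le_one w
  have hp := sR_nonneg w; have hn := sR_nonneg (-w)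
  have hs := sR_swap w
  unfold sF
  split_ifs with h
  · have := stdCDF_strictMono.monotone h
    rcases le_total 0 w with hw | hw
    · rw [abs_of_nonneg hw]; nlinarith
    · rw [abs_of_nonpos hw, neg_neg]; nlinarith
  · have := stdCDF_strictMono.monotone (not_le.1 h).le
    rcases le_total 0 w with hw | hw
    · rw [abs_of_nonneg hw]; nlinarith
    · rw [abs_of_nonpos hw, neg_neg]; nlinarith

lemma sF_le (z w : ℝ) : sF z w ≤ 3 :=
  (sF_le_neg_abs z w).trans (sR_le (by simp))

lemma abs_mul_sF (z w : ℝ) : |w * sF z w| ≤ 1 := by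
  rw [abs_mul, abs_of_nonneg (sF_nonneg z w)]
  have h := sR_mills (-|w|)
  rw [neg_neg] at h
  exact (mul_le_mul_of_nonneg_left (sF_le_neg_abs z w) (abs_nonneg w)).trans h

lemma sF_deriv (z w : ℝ) (h : w ≠ z) :
    HasDerivAt (sF z) (w * sF z w + (if w ≤ z then 1 else 0) - stdCDF z) w := by
  rcases lt_or_gt_of_ne h with h | h
  · have h1 : HasDerivAt (fun w => sR w * (1 - stdCDF z)) ((w * sR w + 1) * (1 - stdCDF z)) w :=
      (sR_hasDeriv w).mul_const _
    have h2 : sF z =ᶠ[𝓝 w] fun w => sR w * (1 - stdCDF z) := by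
      filter_upwards [gt_mem_nhds h] with t ht
      simp [sF, ht.le]
    refine (h1.congr_of_eventuallyEq h2).congr_deriv ?_
    simp [sF, h.le]; ring
  · have h1 : HasDerivAt (fun w => sR (-w) * stdCDF z)
        (((-w) * sR (-w) + 1) * (-1) * (stdCDF z)) w :=
      ((sR_hasDeriv (-w)).comp w (hasDerivAt_neg w)).mul_const _
    have h2 : sF z =ᶠ[𝓝 w] fun w => sR (-w) * stdCDF z := by
      filter_upwards [lt_mem_nhds h] with t ht
      simp [sF, not_le.2 ht]
    refine (h1.congr_of_eventuallyEq h2).congr_deriv ?_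
    simp [sF, not_le.2 h]; ring

lemma mvt_off (f f' : ℝ → ℝ) (z L a b : ℝ) (hf : Continuous f)
    (hd : ∀ w, w ≠ z → HasDerivAt f (f' w) w) (hab : a ≤ b)
    (hL : ∀ w, a ≤ w → w ≤ b → w ≠ z → L ≤ f' w) : L * (b - a) ≤ f b - f a := by
  have key : ∀ a' b', a ≤ a' → a' ≤ b' → b' ≤ b → (z ≤ a' ∨ b' ≤ z) →
      L * (b' - a') ≤ f b' - f a' := by
    intro a' b' ha hab' hb hz
    have hne : ∀ t ∈ Set.Ioo a' b', t ≠ z := by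
      intro t ht; rcases hz with h | h
      · exact (h.trans_lt ht.1).ne'
      · exact (ht.2.trans_le h).ne
    apply Convex.mul_sub_le_image_sub_of_le_deriv (convex_Icc a' b') hf.continuousOn
      (f := f) _ _ a' ⟨le_rfl, hab'⟩ b' ⟨hab', le_rfl⟩ hab'
    · rw [interior_Icc]
      exact fun t ht => (hd t (hne t ht)).differentiableAt.differentiableWithinAt
    · rw [interior_Icc]; intro t ht
      rw [(hd t (hne t ht)).deriv]
      exact hL t (ha.trans ht.1.le) (ht.2.le.trans hb) (hne t ht)
  by_cases h1 : z ≤ a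
  · exact key a b le_rfl hab le_rfl (Or.inl h1)
  by_cases h2 : b ≤ z
  · exact key a b le_rfl hab le_rfl (Or.inr h2)
  push Not at h1 h2
  have k1 := key a z le_rfl h1.le h2.le (Or.inr le_rfl)
  have k2 := key z b h1.le h2.le le_rfl (Or.inl le_rfl)
  linarith

lemma sF_lip_aux (z : ℝ) {a b : ℝ} (h : a ≤ b) : |sF z b - sF z a| ≤ 2 * (b - a) := by
  have h0 := stdCDF_nonneg z; have h1 := stdCDF_le_one z
  have hb : ∀ w, |w * sF z w + (if w ≤ z then 1 else 0) - stdCDF z| ≤ 2 := by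
    intro w
    have := abs_le.1 (abs_mul_sF z w)
    rw [abs_le]; split_ifs <;> constructor <;> linarith
  have k1 := mvt_off (sF z) _ z (-2) a b (sF_cont z) (sF_deriv z) h
    (fun w _ _ _ => (abs_le.1 (hb w)).1)
  have k2 := mvt_off (fun w => - sF z w) _ z (-2) a b (sF_cont z).neg
    (fun w hw => (sF_deriv z w hw).neg) h
    (fun w _ _ _ => by have := (abs_le.1 (hb w)).2; linarith)
  rw [abs_le]; constructor <;> linarith

lemma sF_lip (z a b : ℝ) : |sF z b - sF z a| ≤ 2 * |b - a| := by
  rcases le_total a b with h | h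
  · rw [abs_of_nonneg (sub_nonneg.2 h)]; exact sF_lip_aux z h
  · rw [abs_sub_comm, abs_sub_comm b a, abs_of_nonneg (sub_nonneg.2 h)]; exact sF_lip_aux z h

lemma sG_lip (z w v : ℝ) : |v * sF z v - w * sF z w| ≤ (2 * |w| + 3) * |v - w| := by
  have e : v * sF z v - w * sF z w = w * (sF z v - sF z w) + (v - w) * sF z v := by ring
  rw [e]
  refine (abs_add_le _ _).trans ?_
  rw [abs_mul, abs_mul, abs_of_nonneg (sF_nonneg z v)]
  have h1 := mul_le_mul_of_nonneg_left (sF_lip z w v) (abs_nonneg w)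
  have h2 := mul_le_mul_of_nonneg_left (sF_le z v) (abs_nonneg (v - w))
  linarith

/-- key pointwise inequality -/
lemma stein_pt (z w ξ δ : ℝ) (hξ : |ξ| ≤ δ) :
    ξ ^ 2 * (w * sF z w - (2 * |w| + 3) * δ + (if w ≤ z - δ then 1 else 0) - stdCDF z)
      ≤ ξ * (sF z (w + ξ) - sF z w) := by
  set L := w * sF z w - (2 * |w| + 3) * δ + (if w ≤ z - δ then 1 else 0) - stdCDF z with hL
  have hlow : ∀ v, |v - w| ≤ δ →
      L ≤ v * sF z v + (if v ≤ z then 1 else 0) - stdCDF z := by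
    intro v hv
    have h1 := (abs_le.1 (sG_lip z w v)).1
    have h2 : (2 * |w| + 3) * |v - w| ≤ (2 * |w| + 3) * δ :=
      mul_le_mul_of_nonneg_left hv (by positivity)
    have h3 : (if w ≤ z - δ then (1:ℝ) else 0) ≤ (if v ≤ z then 1 else 0) := by
      split_ifs with h4 h5 <;> try norm_num
      exact h5 (by linarith [(abs_le.1 hv).2])
    rw [hL]; linarith
  have hx := abs_le.1 hξ
  rcases le_total 0 ξ with h | h
  · have := mvt_off (sF z) _ z L w (w + ξ) (sF_cont z) (sF_deriv z) (by linarith)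
      (fun v h1 h2 _ => hlow v (abs_le.2 ⟨by linarith, by linarith⟩))
    nlinarith
  · have := mvt_off (sF z) _ z L (w + ξ) w (sF_cont z) (sF_deriv z) (by linarith)
      (fun v h1 h2 _ => hlow v (abs_le.2 ⟨by linarith, by linarith⟩))
    nlinarith

/-! ### Finite product probability and Berry–Esseen -/

section BE
variable {κ Y : Type*} [Fintype κ] [DecidableEq κ] [Fintype Y]

/-- Expectation under a finite product distribution. -/
noncomputable def EE (p : κ → Y → ℝ) (F : (κ → Y) → ℝ) : ℝ :=
  ∑ x : κ → Y, (∏ k, p k (x k)) * F x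

lemma EE_add (p : κ → Y → ℝ) (F G : (κ → Y) → ℝ) :
    EE p (fun x => F x + G x) = EE p F + EE p G := by
  simp [EE, mul_add, Finset.sum_add_distrib]

lemma EE_sum {S : Type*} (s : Finset S) (p : κ → Y → ℝ) (F : S → (κ → Y) → ℝ) :
    EE p (fun x => ∑ i ∈ s, F i x) = ∑ i ∈ s, EE p (F i) := by
  simp only [EE, Finset.mul_sum]
  exact Finset.sum_comm

lemma EE_smul (p : κ → Y → ℝ) (c : ℝ) (F : (κ → Y) → ℝ) :
    EE p (fun x => c * F x) = c * EE p F := by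
  simp only [EE, Finset.mul_sum]
  exact Finset.sum_congr rfl fun x _ => by ring

lemma EE_one {p : κ → Y → ℝ} (hp : ∀ k, IsDist (p k)) : EE p (fun _ => 1) = 1 := by
  simp only [EE, mul_one]
  rw [← Fintype.piFinset_univ, ← Finset.prod_univ_sum]
  exact Finset.prod_eq_one fun k _ => (hp k).2

lemma EE_const {p : κ → Y → ℝ} (hp : ∀ k, IsDist (p k)) (c : ℝ) : EE p (fun _ => c) = c := by
  have := EE_smul p c (fun _ => 1)
  rw [EE_one hp] at this; simpa using this

lemma EE_mono {p : κ → Y → ℝ} (hp : ∀ k, IsDist (p k)) {F G : (κ → Y) → ℝ}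
    (h : ∀ x, F x ≤ G x) : EE p F ≤ EE p G :=
  Finset.sum_le_sum fun x _ => mul_le_mul_of_nonneg_left (h x)
    (Finset.prod_nonneg fun k _ => (hp k).1 _)

lemma EE_resample {p : κ → Y → ℝ} (hp : ∀ k, IsDist (p k)) (k : κ) (F : (κ → Y) → ℝ) :
    EE p F = EE p (fun x => ∑ a, p k a * F (Function.update x k a)) := by
  have e1 : EE p F = ∑ q : (κ → Y) × Y, (∏ l, p l (q.1 l)) * p k q.2 * F q.1 := by
    rw [Fintype.sum_prod_type]
    refine Finset.sum_congr rfl fun x _ => ?_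
    simp only
    rw [← Finset.sum_mul, ← Finset.mul_sum, (hp k).2, mul_one]
  have e2 : EE p (fun x => ∑ a, p k a * F (Function.update x k a)) =
      ∑ q : (κ → Y) × Y, (∏ l, p l (q.1 l)) * p k q.2 * F (Function.update q.1 k q.2) := by
    rw [Fintype.sum_prod_type]
    refine Finset.sum_congr rfl fun x _ => ?_
    simp only
    rw [Finset.mul_sum]
    exact Finset.sum_congr rfl fun a _ => by ring
  rw [e1, e2]
  refine Finset.sum_nbij' (fun q => (Function.update q.1 k q.2, q.1 k))
    (fun q => (Function.update q.1 k q.2, q.1 k)) (by simp) (by simp) ?_ ?_ ?_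
  · rintro ⟨x, a⟩ _; simp
  · rintro ⟨x, a⟩ _; simp
  · rintro ⟨x, a⟩ _
    simp only [Function.update_idem, Function.update_eq_self]
    congr 1
    rw [← Finset.mul_prod_erase _ _ (Finset.mem_univ k),
      ← Finset.mul_prod_erase _ (fun l => p l (Function.update x k a l)) (Finset.mem_univ k)]
    have : ∏ l ∈ Finset.univ.erase k, p l (Function.update x k a l) =
        ∏ l ∈ Finset.univ.erase k, p l (x l) := by
      refine Finset.prod_congr rfl fun l hl => ?_
      rw [Function.update_of_ne (Finset.ne_of_mem_erase hl)]
    rw [this]; simp; ring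

lemma EE_indep {p : κ → Y → ℝ} (hp : ∀ k, IsDist (p k)) (k : κ) (g : Y → ℝ) (H : (κ → Y) → ℝ)
    (hH : ∀ x a, H (Function.update x k a) = H x) :
    EE p (fun x => g (x k) * H x) = (∑ a, p k a * g a) * EE p H := by
  rw [EE_resample hp k, ← EE_smul]
  congr 1; ext x
  simp only [Function.update_self, hH]
  rw [Finset.sum_mul]
  exact Finset.sum_congr rfl fun a _ => by ring

lemma EE_coord {p : κ → Y → ℝ} (hp : ∀ k, IsDist (p k)) (k : κ) (g : Y → ℝ) :
    EE p (fun x => g (x k)) = ∑ a, p k a * g a := by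
  have := EE_indep hp k g (fun _ => 1) (fun _ _ => rfl)
  rw [EE_one hp] at this; simpa using this

/-- sum of centred independent variables: second moment -/
lemma EE_sq {p : κ → Y → ℝ} (hp : ∀ k, IsDist (p k)) (ξ : κ → Y → ℝ)
    (h0 : ∀ k, ∑ a, p k a * ξ k a = 0) :
    EE p (fun x => (∑ k, ξ k (x k)) ^ 2) = ∑ k, ∑ a, p k a * ξ k a ^ 2 := by
  have e : (fun x : κ → Y => (∑ k, ξ k (x k)) ^ 2) =
      fun x => ∑ k, (ξ k (x k) ^ 2 + ξ k (x k) * ∑ l ∈ Finset.univ.erase k, ξ l (x l)) := by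
    ext x
    rw [sq, Finset.sum_mul]
    refine Finset.sum_congr rfl fun k _ => ?_
    rw [← Finset.add_sum_erase _ (fun k => ξ k (x k)) (Finset.mem_univ k)]; ring
  rw [e, EE_sum]
  refine Finset.sum_congr rfl fun k _ => ?_
  rw [EE_add, EE_coord hp k (fun a => ξ k a ^ 2), EE_indep hp k (ξ k), h0, zero_mul, add_zero]
  intro x a
  refine Finset.sum_congr rfl fun l hl => ?_
  rw [Function.update_of_ne (Finset.ne_of_mem_erase hl)]

open Classical in
/-- Probability of an event. -/
noncomputable def PR (p : κ → Y → ℝ) (E : (κ → Y) → Prop) : ℝ :=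
  EE p (fun x => if E x then 1 else 0)

lemma PR_mono {p : κ → Y → ℝ} (hp : ∀ k, IsDist (p k)) {E F : (κ → Y) → Prop}
    (h : ∀ x, E x → F x) : PR p E ≤ PR p F := by
  apply EE_mono hp; intro x
  by_cases h1 : E x
  · simp [h1, h x h1]
  · simp only [h1, if_false]; split_ifs <;> norm_num

lemma PR_mono_supp {p : κ → Y → ℝ} (hp : ∀ k, IsDist (p k)) {E F : (κ → Y) → Prop}
    (h : ∀ x, (∀ k, 0 < p k (x k)) → E x → F x) : PR p E ≤ PR p F := by
  refine Finset.sum_le_sum fun x _ => ?_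
  by_cases h0 : ∀ k, 0 < p k (x k)
  · refine mul_le_mul_of_nonneg_left ?_ (Finset.prod_nonneg fun k _ => (hp k).1 _)
    by_cases h1 : E x
    · simp [h1, h x h0 h1]
    · simp only [h1, if_false]; split_ifs <;> norm_num
  · push Not at h0
    obtain ⟨k, hk⟩ := h0
    have : ∏ k, p k (x k) = 0 :=
      Finset.prod_eq_zero (Finset.mem_univ k) (le_antisymm hk ((hp k).1 _))
    simp [this]

lemma PR_le_one {p : κ → Y → ℝ} (hp : ∀ k, IsDist (p k)) (E : (κ → Y) → Prop) : PR p E ≤ 1 := by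
  rw [← EE_one hp]; apply EE_mono hp; intro x; split_ifs <;> norm_num

lemma PR_nonneg {p : κ → Y → ℝ} (hp : ∀ k, IsDist (p k)) (E : (κ → Y) → Prop) : 0 ≤ PR p E := by
  rw [← EE_const hp 0]; apply EE_mono hp; intro x; split_ifs <;> norm_num

lemma PR_compl {p : κ → Y → ℝ} (hp : ∀ k, IsDist (p k)) (E : (κ → Y) → Prop) :
    PR p E + PR p (fun x => ¬ E x) = 1 := by
  rw [← EE_one hp]; unfold PR; rw [← EE_add]; congr 1; ext x
  by_cases h : E x <;> simp [h]

lemma PR_or {p : κ → Y → ℝ} (hp : ∀ k, IsDist (p k)) (E F : (κ → Y) → Prop) :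
    PR p (fun x => E x ∨ F x) ≤ PR p E + PR p F := by
  unfold PR; rw [← EE_add]; apply EE_mono hp; intro x
  by_cases h : E x <;> by_cases h' : F x <;> simp [h, h']

lemma PR_exists {S : Type*} (s : Finset S) {p : κ → Y → ℝ} (hp : ∀ k, IsDist (p k))
    (E : S → (κ → Y) → Prop) :
    PR p (fun x => ∃ i ∈ s, E i x) ≤ ∑ i ∈ s, PR p (E i) := by
  classical
  unfold PR; rw [← EE_sum]; apply EE_mono hp; intro x
  by_cases h : ∃ i ∈ s, E i x
  · simp only [h, if_true]
    obtain ⟨i, hi, hE⟩ := h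
    have := Finset.single_le_sum (f := fun i => if E i x then (1:ℝ) else 0)
      (fun i _ => by split_ifs <;> norm_num) hi
    simpa [hE] using this
  · simp only [h, if_false]
    exact Finset.sum_nonneg fun i _ => by split_ifs <;> norm_num

lemma be_core {p : κ → Y → ℝ} (hp : ∀ k, IsDist (p k)) (ξ : κ → Y → ℝ)
    (h0 : ∀ k, ∑ a, p k a * ξ k a = 0) (h1 : ∑ k, ∑ a, p k a * ξ k a ^ 2 = 1)
    (δ : ℝ) (hδ0 : 0 ≤ δ) (hδ1 : δ ≤ 1) (hb : ∀ k a, |ξ k a| ≤ δ) (z : ℝ) :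
    PR p (fun x => ∑ k, ξ k (x k) ≤ z - 2 * δ) ≤ stdCDF z + 12 * δ := by
  set W : (κ → Y) → ℝ := fun x => ∑ k, ξ k (x k) with hW
  set Wk : κ → (κ → Y) → ℝ := fun k x => ∑ l ∈ Finset.univ.erase k, ξ l (x l) with hWk
  have hWW : ∀ k x, W x = Wk k x + ξ k (x k) := by
    intro k x
    simp only [hW, hWk]
    rw [← Finset.add_sum_erase _ (fun k => ξ k (x k)) (Finset.mem_univ k)]; ring
  have hinv : ∀ k x a, Wk k (Function.update x k a) = Wk k x := by
    intro k x a
    refine Finset.sum_congr rfl fun l hl => ?_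
    rw [Function.update_of_ne (Finset.ne_of_mem_erase hl)]
  set σ : κ → ℝ := fun k => ∑ a, p k a * ξ k a ^ 2 with hσ
  have hσ0 : ∀ k, 0 ≤ σ k := fun k =>
    Finset.sum_nonneg fun a _ => mul_nonneg ((hp k).1 a) (sq_nonneg _)
  set H : ℝ → ℝ := fun w =>
    w * sF z w - (2 * |w| + 3) * δ + (if w ≤ z - δ then 1 else 0) - stdCDF z with hH
  set J : (κ → Y) → ℝ := fun x => W x * sF z (W x) - (4 * |W x| + 8) * δ +
    (if W x ≤ z - 2 * δ then 1 else 0) - stdCDF z with hJ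
  have hHJ : ∀ k x, J x ≤ H (Wk k x) := by
    intro k x
    have e := hWW k x
    have hx := hb k (x k)
    have hd : |Wk k x - W x| ≤ δ := by rw [e]; simpa using hx
    have g1 := (abs_le.1 (sG_lip z (W x) (Wk k x))).1
    have g2 : (2 * |W x| + 3) * |Wk k x - W x| ≤ (2 * |W x| + 3) * δ :=
      mul_le_mul_of_nonneg_left hd (by positivity)
    have g3 : |Wk k x| ≤ |W x| + 1 := by
      have := abs_sub_abs_le_abs_sub (Wk k x) (W x); linarith
    have g4 : (2 * |Wk k x| + 3) * δ ≤ (2 * |W x| + 5) * δ :=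
      mul_le_mul_of_nonneg_right (by linarith) hδ0
    have g5 : (if W x ≤ z - 2 * δ then (1:ℝ) else 0) ≤ (if Wk k x ≤ z - δ then 1 else 0) := by
      split_ifs with h4 h5 <;> try norm_num
      exact h5 (by linarith [(abs_le.1 hd).2])
    simp only [hJ, hH]; linarith
  have key : EE p J ≤ EE p (fun x => W x * sF z (W x)) := by
    have e1 : EE p (fun x => W x * sF z (W x)) =
        ∑ k, EE p (fun x => ξ k (x k) * (sF z (Wk k x + ξ k (x k)) - sF z (Wk k x))) := by
      have : (fun x => W x * sF z (W x)) = fun x => ∑ k, ξ k (x k) * sF z (W x) := by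
        ext x; rw [← Finset.sum_mul]
      rw [this, EE_sum]
      refine Finset.sum_congr rfl fun k _ => ?_
      have h2 := EE_indep hp k (ξ k) (fun x => sF z (Wk k x)) (fun x a => by rw [hinv])
      rw [h0, zero_mul] at h2
      rw [← add_zero (EE p fun x => ξ k (x k) * (sF z (Wk k x + ξ k (x k)) - sF z (Wk k x))),
        ← h2, ← EE_add]
      congr 1; ext x; rw [hWW k x]; ring
    rw [e1]
    have e2 : ∀ k, σ k * EE p J ≤
        EE p (fun x => ξ k (x k) * (sF z (Wk k x + ξ k (x k)) - sF z (Wk k x))) := by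
      intro k
      calc σ k * EE p J ≤ σ k * EE p (fun x => H (Wk k x)) :=
            mul_le_mul_of_nonneg_left (EE_mono hp (hHJ k)) (hσ0 k)
        _ = EE p (fun x => ξ k (x k) ^ 2 * H (Wk k x)) :=
            (EE_indep hp k (fun a => ξ k a ^ 2) (fun x => H (Wk k x))
              (fun x a => by rw [hinv])).symm
        _ ≤ _ := EE_mono hp fun x => stein_pt z (Wk k x) (ξ k (x k)) δ (hb k (x k))
    calc EE p J = (∑ k, σ k) * EE p J := by rw [h1, one_mul]
      _ = ∑ k, σ k * EE p J := Finset.sum_mul _ _ _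
      _ ≤ _ := Finset.sum_le_sum fun k _ => e2 k
  have habs : EE p (fun x => |W x|) ≤ 1 := by
    have h3 : EE p (fun x => |W x|) ≤ EE p (fun x => (1/2) * W x ^ 2 + 1/2) := by
      apply EE_mono hp; intro x
      have := sq_nonneg (|W x| - 1)
      rw [← sq_abs (W x)]; nlinarith
    rw [EE_add, EE_smul, EE_const hp, EE_sq hp ξ h0, h1] at h3
    linarith
  have e3 : EE p J = EE p (fun x => W x * sF z (W x)) + (-4 * δ) * EE p (fun x => |W x|)
      + (- 8 * δ - stdCDF z) + PR p (fun x => W x ≤ z - 2 * δ) := by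
    rw [← EE_const hp (- 8 * δ - stdCDF z), ← EE_smul, ← EE_add, ← EE_add]
    unfold PR
    rw [← EE_add]
    congr 1; ext x
    simp only [hJ]
    by_cases hc : W x ≤ z - 2 * δ
    · simp only [hc, if_true]; ring
    · simp only [hc, if_false]; ring
  have := mul_le_mul_of_nonneg_left habs hδ0
  linarith

/-- Berry–Esseen for sums of bounded independent variables (both sides). -/
lemma be_main {p : κ → Y → ℝ} (hp : ∀ k, IsDist (p k)) (g : κ → Y → ℝ) (μ s D r : ℝ)
    (hμ : μ = ∑ k, ∑ a, p k a * g k a) (hs : 0 < s)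
    (hs2 : s ^ 2 = ∑ k, ∑ a, p k a * (g k a - ∑ b, p k b * g k b) ^ 2)
    (hD0 : 0 ≤ D) (hD : ∀ k a, |g k a - ∑ b, p k b * g k b| ≤ D) :
    PR p (fun x => ∑ k, g k (x k) ≤ μ + s * r) ≤ stdCDF r + 14 * (D / s) ∧
    stdCDF r - 14 * (D / s) ≤ PR p (fun x => ∑ k, g k (x k) ≤ μ + s * r) := by
  have hq : 0 ≤ D / s := by positivity
  by_cases hδ : D / s ≤ 1
  swap
  · have := stdCDF_nonneg r; have := stdCDF_le_one r
    have := PR_nonneg hp (fun x => ∑ k, g k (x k) ≤ μ + s * r)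
    have := PR_le_one hp (fun x => ∑ k, g k (x k) ≤ μ + s * r)
    constructor <;> linarith
  set m : κ → ℝ := fun k => ∑ b, p k b * g k b with hm
  set ξ : κ → Y → ℝ := fun k a => (g k a - m k) / s with hξ
  have hsum : ∀ x : κ → Y, ∑ k, ξ k (x k) = (∑ k, g k (x k) - μ) / s := by
    intro x; simp only [hξ]
    rw [← Finset.sum_div, Finset.sum_sub_distrib, hμ]
  have h0 : ∀ k, ∑ a, p k a * ξ k a = 0 := by
    intro k
    have : ∑ a, p k a * ξ k a = (∑ a, p k a * g k a - (∑ a, p k a) * m k) / s := by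
      rw [Finset.sum_mul, ← Finset.sum_sub_distrib, Finset.sum_div]
      exact Finset.sum_congr rfl fun a _ => by simp only [hξ]; ring
    rw [this, (hp k).2]; simp [hm]
  have h1 : ∑ k, ∑ a, p k a * ξ k a ^ 2 = 1 := by
    have : ∑ k, ∑ a, p k a * ξ k a ^ 2 = s ^ 2 / s ^ 2 := by
      rw [hs2, Finset.sum_div, ← hs2]
      refine Finset.sum_congr rfl fun k _ => ?_
      rw [Finset.sum_div]
      exact Finset.sum_congr rfl fun a _ => by simp only [hξ]; rw [div_pow]; ring
    rw [this]; field_simp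
  have hb : ∀ k a, |ξ k a| ≤ D / s := by
    intro k a; simp only [hξ]; rw [abs_div, abs_of_pos hs]
    gcongr; exact hD k a
  constructor
  · have := be_core hp ξ h0 h1 (D / s) hq hδ hb (r + 2 * (D / s))
    have h2 := stdCDF_lip (show r ≤ r + 2 * (D / s) by linarith)
    refine le_trans (PR_mono hp fun x hx => ?_) (this.trans (by linarith))
    rw [hsum, div_le_iff₀ hs]; linarith
  · have := be_core hp (fun k a => - ξ k a) (fun k => by simpa using h0 k) (by simpa using h1)
      (D / s) hq hδ (fun k a => by rw [abs_neg]; exact hb k a) (-(r - 2 * (D / s)) )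
    have h2 := stdCDF_lip (show r - 2 * (D / s) ≤ r by linarith)
    have h3 := stdCDF_neg (r - 2 * (D / s))
    have h4 := PR_compl hp (fun x => ∑ k, g k (x k) ≤ μ + s * r)
    have h5 : PR p (fun x => ¬ (∑ k, g k (x k) ≤ μ + s * r)) ≤
        PR p (fun x => ∑ k, - ξ k (x k) ≤ -(r - 2 * (D / s)) - 2 * (D / s)) := by
      apply PR_mono hp; intro x hx
      rw [Finset.sum_neg_distrib, hsum]
      have : r ≤ (∑ k, g k (x k) - μ) / s := by rw [le_div_iff₀ hs]; linarith
      linarith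
    linarith

/-- Chebyshev, lower tail -/
lemma cheb {p : κ → Y → ℝ} (hp : ∀ k, IsDist (p k)) (g : κ → Y → ℝ) (μ t : ℝ)
    (hμ : μ = ∑ k, ∑ a, p k a * g k a) (ht : 0 < t) :
    PR p (fun x => ∑ k, g k (x k) ≤ μ - t) ≤
      (∑ k, ∑ a, p k a * (g k a - ∑ b, p k b * g k b) ^ 2) / t ^ 2 := by
  set m : κ → ℝ := fun k => ∑ b, p k b * g k b with hm
  have h0 : ∀ k, ∑ a, p k a * (g k a - m k) = 0 := by
    intro k
    simp only [mul_sub, Finset.sum_sub_distrib, ← Finset.sum_mul]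
    rw [(hp k).2]; simp [hm]
  rw [← EE_sq hp (fun k a => g k a - m k) h0, div_eq_inv_mul, ← EE_smul]
  apply EE_mono hp; intro x
  rw [Finset.sum_sub_distrib, ← hμ]
  split_ifs with h
  · rw [← div_eq_inv_mul, le_div_iff₀ (by positivity)]
    nlinarith
  · positivity

end BE

/-! ### Information-theoretic inequalities -/

lemma pt_ineq {T Q : ℝ} (hT : 0 ≤ T) (hQ : 0 ≤ Q) (h : Q = 0 → T = 0) :
    T - Q ≤ T * Real.log T - T * Real.log Q := by
  rcases hT.eq_or_lt with h0 | h0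
  · subst h0; simp [hQ]
  · have hQ' : 0 < Q := lt_of_le_of_ne hQ fun h1 => h0.ne' (h h1.symm)
    have h1 := Real.log_le_sub_one_of_pos (div_pos hQ' h0)
    rw [Real.log_div hQ'.ne' h0.ne'] at h1
    have h2 := mul_le_mul_of_nonneg_left h1 hT
    have : T * (Q / T - 1) = Q - T := by field_simp
    linarith

lemma GJS_eq (T1 T2 : X → ℝ) {α : ℝ} (hα : 0 < α) (h1 : ∀ x, 0 ≤ T1 x) (h2 : ∀ x, 0 ≤ T2 x) :
    GJS T1 T2 α = ∑ x, (α * (T1 x * Real.log (T1 x)) + T2 x * Real.log (T2 x)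
      - (α * T1 x + T2 x) * Real.log (mix T1 T2 α x)) := by
  unfold GJS klDivR
  rw [Finset.mul_sum, ← Finset.sum_add_distrib]
  refine Finset.sum_congr rfl fun x _ => ?_
  have a1 : T1 x * Real.log (T1 x / mix T1 T2 α x) =
      T1 x * Real.log (T1 x) - T1 x * Real.log (mix T1 T2 α x) := by
    rcases (h1 x).eq_or_lt with h | h
    · simp [← h]
    · have : 0 < mix T1 T2 α x := by
        have := h2 x
        unfold mix; positivity
      rw [Real.log_div h.ne' this.ne']; ring
  have a2 : T2 x * Real.log (T2 x / mix T1 T2 α x) =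
      T2 x * Real.log (T2 x) - T2 x * Real.log (mix T1 T2 α x) := by
    rcases (h2 x).eq_or_lt with h | h
    · simp [← h]
    · have : 0 < mix T1 T2 α x := by
        have := h1 x
        unfold mix; positivity
      rw [Real.log_div h.ne' this.ne']; ring
  rw [a1, a2]; ring

lemma mix_nonneg {T1 T2 : X → ℝ} {α : ℝ} (hα : 0 < α) (h1 : ∀ x, 0 ≤ T1 x) (h2 : ∀ x, 0 ≤ T2 x)
    (x : X) : 0 ≤ mix T1 T2 α x := by
  have := h1 x; have := h2 x; unfold mix; positivity

lemma mix_isDist {T1 T2 : X → ℝ} {α : ℝ} (hα : 0 < α) (h1 : IsDist T1) (h2 : IsDist T2) :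
    IsDist (mix T1 T2 α) := by
  refine ⟨mix_nonneg hα h1.1 h2.1, ?_⟩
  unfold mix
  rw [← Finset.sum_div, Finset.sum_add_distrib, ← Finset.mul_sum, h1.2, h2.2]
  field_simp; ring

lemma mix_mul {T1 T2 : X → ℝ} {α : ℝ} (hα : 0 < α) (x : X) :
    (1 + α) * mix T1 T2 α x = α * T1 x + T2 x := by
  unfold mix; field_simp

lemma gibbs {T Q : X → ℝ} (hT : IsDist T) (hQ : IsDist Q) (h : ∀ x, Q x = 0 → T x = 0) :
    ∑ x, T x * Real.log (Q x) ≤ ∑ x, T x * Real.log (T x) := by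
  have : ∑ x, (T x - Q x) ≤ ∑ x, (T x * Real.log (T x) - T x * Real.log (Q x)) :=
    Finset.sum_le_sum fun x _ => pt_ineq (hT.1 x) (hQ.1 x) (h x)
  rw [Finset.sum_sub_distrib, Finset.sum_sub_distrib, hT.2, hQ.2] at this
  linarith

/-- the GJS divergence is minimal over the common reference distribution -/
lemma gjs_min {T1 T2 Q : X → ℝ} {α : ℝ} (hα : 0 < α) (h1 : IsDist T1) (h2 : IsDist T2)
    (hQ : IsDist Q) (a1 : ∀ x, Q x = 0 → T1 x = 0) (a2 : ∀ x, Q x = 0 → T2 x = 0) :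
    α * ∑ x, T1 x * Real.log (Q x) + ∑ x, T2 x * Real.log (Q x) + GJS T1 T2 α ≤
      α * ∑ x, T1 x * Real.log (T1 x) + ∑ x, T2 x * Real.log (T2 x) := by
  have hm := gibbs (mix_isDist hα h1 h2) hQ
    (fun x hx => by unfold mix; rw [a1 x hx, a2 x hx]; simp)
  have hm := mul_le_mul_of_nonneg_left hm (show 0 ≤ 1 + α by linarith)
  rw [Finset.mul_sum, Finset.mul_sum] at hm
  simp only [← mul_assoc, mix_mul hα] at hm
  rw [GJS_eq T1 T2 hα h1.1 h2.1, Finset.sum_sub_distrib, Finset.sum_add_distrib, ← Finset.mul_sum]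
  have : ∑ x, (α * T1 x + T2 x) * Real.log (Q x) =
      α * ∑ x, T1 x * Real.log (Q x) + ∑ x, T2 x * Real.log (Q x) := by
    rw [Finset.mul_sum, ← Finset.sum_add_distrib]
    exact Finset.sum_congr rfl fun x _ => by ring
  linarith

/-- linear lower bound of GJS (tangent plane) -/
lemma gjs_lin {T1 T2 P1 P2 : X → ℝ} {α : ℝ} (hα : 0 < α) (h1 : ∀ x, 0 ≤ T1 x)
    (h2 : ∀ x, 0 ≤ T2 x) (hP1 : ∀ x, 0 ≤ P1 x) (hP2 : ∀ x, 0 ≤ P2 x)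
    (a1 : ∀ x, P1 x = 0 → T1 x = 0) (a2 : ∀ x, P2 x = 0 → T2 x = 0) :
    α * ∑ x, T1 x * iDens1 P1 P2 α x + ∑ x, T2 x * iDens2 P1 P2 α x ≤ GJS T1 T2 α := by
  rw [GJS_eq T1 T2 hα h1 h2, Finset.mul_sum, ← Finset.sum_add_distrib]
  refine Finset.sum_le_sum fun x _ => ?_
  by_cases hm : α * P1 x + P2 x = 0
  · have p1 : P1 x = 0 := by
      have := hP1 x; have := hP2 x; nlinarith
    have p2 : P2 x = 0 := by rw [p1] at hm; simpa using hm
    simp [a1 x p1, a2 x p2]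
  have hm' : 0 < α * P1 x + P2 x :=
    lt_of_le_of_ne (by have := hP1 x; have := hP2 x; positivity) (Ne.symm hm)
  by_cases ht : α * T1 x + T2 x = 0
  · have p1 : T1 x = 0 := by
      have := h1 x; have := h2 x; nlinarith
    have p2 : T2 x = 0 := by rw [p1] at ht; simpa using ht
    simp [p1, p2]
  have ht' : 0 < α * T1 x + T2 x :=
    lt_of_le_of_ne (by have := h1 x; have := h2 x; positivity) (Ne.symm ht)
  set r := (α * T1 x + T2 x) / (α * P1 x + P2 x) with hr
  have hr0 : 0 < r := div_pos ht' hm'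
  have k1 := pt_ineq (h1 x) (mul_nonneg (hP1 x) hr0.le) (fun h => a1 x (by
    rcases mul_eq_zero.1 h with h | h; exact h; exact absurd h hr0.ne'))
  have k2 := pt_ineq (h2 x) (mul_nonneg (hP2 x) hr0.le) (fun h => a2 x (by
    rcases mul_eq_zero.1 h with h | h; exact h; exact absurd h hr0.ne'))
  have e0 : Real.log (mix T1 T2 α x) = Real.log (α * T1 x + T2 x) - Real.log (1 + α) := by
    unfold mix; rw [Real.log_div ht (by positivity)]
  have hlr : Real.log r = Real.log (α * T1 x + T2 x) - Real.log (α * P1 x + P2 x) := by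
    rw [hr, Real.log_div ht hm]
  have e1 : T1 x * iDens1 P1 P2 α x =
      T1 x * Real.log (P1 x * r) - T1 x * Real.log (mix T1 T2 α x) := by
    by_cases hp : P1 x = 0
    · simp [a1 x hp]
    · unfold iDens1
      rw [Real.log_div (by positivity) hm, Real.log_mul (by positivity) hp,
        Real.log_mul hp hr0.ne', e0, hlr]; ring
  have e2 : T2 x * iDens2 P1 P2 α x =
      T2 x * Real.log (P2 x * r) - T2 x * Real.log (mix T1 T2 α x) := by
    by_cases hp : P2 x = 0
    · simp [a2 x hp]
    · unfold iDens2
      rw [Real.log_div (by positivity) hm, Real.log_mul (by positivity) hp,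
        Real.log_mul hp hr0.ne', e0, hlr]; ring
  have e3 : α * (P1 x * r) + P2 x * r = α * T1 x + T2 x := by
    rw [hr]; field_simp
  have k1 := mul_le_mul_of_nonneg_left k1 hα.le
  rw [e1, e2]
  nlinarith

lemma GJS_expect (P1 P2 : X → ℝ) (α : ℝ) :
    GJS P1 P2 α = α * expect P1 (iDens1 P1 P2 α) + expect P2 (iDens2 P1 P2 α) := by
  unfold GJS klDivR expect iDens1 iDens2 mix
  simp only [div_div_eq_mul_div]
  simp only [mul_comm (1 + α)]

lemma GJS_pos {P1 P2 : X → ℝ} {α : ℝ} (hα : 0 < α) (h1 : IsDist P1) (h2 : IsDist P2)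
    (hne : P1 ≠ P2) : 0 < GJS P1 P2 α := by
  have hm := mix_isDist hα h1 h2
  have a1 : ∀ x, mix P1 P2 α x = 0 → P1 x = 0 := by
    intro x hx
    have := mix_mul (T1 := P1) (T2 := P2) hα x
    rw [hx] at this
    have := h1.1 x; have := h2.1 x; nlinarith
  have a2 : ∀ x, mix P1 P2 α x = 0 → P2 x = 0 := by
    intro x hx
    have := mix_mul (T1 := P1) (T2 := P2) hα x
    rw [hx, a1 x hx] at this
    linarith
  obtain ⟨x, hx⟩ : ∃ x, P1 x ≠ P2 x := by
    by_contra h; push Not at h; exact hne (funext h)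
  have e : GJS P1 P2 α = ∑ x, (α * (P1 x * Real.log (P1 x) - P1 x * Real.log (mix P1 P2 α x)
      - (P1 x - mix P1 P2 α x)) + (P2 x * Real.log (P2 x) - P2 x * Real.log (mix P1 P2 α x)
      - (P2 x - mix P1 P2 α x))) := by
    have e0 : ∑ x, (α * (P1 x - mix P1 P2 α x) + (P2 x - mix P1 P2 α x)) = 0 := by
      rw [Finset.sum_add_distrib, ← Finset.mul_sum, Finset.sum_sub_distrib, Finset.sum_sub_distrib,
        h1.2, h2.2, hm.2]; ring
    rw [GJS_eq P1 P2 hα h1.1 h2.1, ← sub_zero (∑ x, _), ← e0, ← Finset.sum_sub_distrib]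
    exact Finset.sum_congr rfl fun x _ => by ring
  rw [e]
  have nn : ∀ x, 0 ≤ P1 x * Real.log (P1 x) - P1 x * Real.log (mix P1 P2 α x)
      - (P1 x - mix P1 P2 α x) := fun x => by
    have := pt_ineq (h1.1 x) (hm.1 x) (a1 x); linarith
  have nn2 : ∀ x, 0 ≤ P2 x * Real.log (P2 x) - P2 x * Real.log (mix P1 P2 α x)
      - (P2 x - mix P1 P2 α x) := fun x => by
    have := pt_ineq (h2.1 x) (hm.1 x) (a2 x); linarith
  have hxne : P1 x ≠ mix P1 P2 α x := by
    intro h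
    have := mix_mul (T1 := P1) (T2 := P2) hα x
    rw [← h] at this; apply hx; linarith
  have hmx : 0 < mix P1 P2 α x := lt_of_le_of_ne (hm.1 x) fun h => by
    rw [← h] at hxne; exact hxne (a1 x h.symm)
  have st : 0 < P1 x * Real.log (P1 x) - P1 x * Real.log (mix P1 P2 α x)
      - (P1 x - mix P1 P2 α x) := by
    rcases (h1.1 x).eq_or_lt with h | h
    · rw [← h]; simp [hmx]
    · have h3 : mix P1 P2 α x / P1 x ≠ 1 := by
        intro h4; rw [div_eq_one_iff_eq h.ne'] at h4; exact hxne h4.symm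
      have h4 := Real.log_lt_sub_one_of_pos (div_pos hmx h) h3
      rw [Real.log_div hmx.ne' h.ne'] at h4
      have h5 := mul_lt_mul_of_pos_left h4 h
      have : P1 x * (mix P1 P2 α x / P1 x - 1) = mix P1 P2 α x - P1 x := by field_simp
      linarith
  apply Finset.sum_pos' (fun x _ => add_nonneg (mul_nonneg hα.le (nn x)) (nn2 x))
  exact ⟨x, Finset.mem_univ _, add_pos_of_pos_of_nonneg (mul_pos hα st) (nn2 x)⟩

/-! ### Types -/

lemma empDist_sum {m : ℕ} (hm : 0 < m) (x : Fin m → X) (h : X → ℝ) :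
    ∑ t, h (x t) = m * ∑ a, empDist x a * h a := by
  have hm' : (m : ℝ) ≠ 0 := by positivity
  rw [Finset.mul_sum]
  rw [← Finset.sum_fiberwise Finset.univ x (fun t => h (x t))]
  refine Finset.sum_congr rfl fun a _ => ?_
  rw [Finset.sum_congr rfl (g := fun _ => h a)
    (fun t ht => by rw [(Finset.mem_filter.1 ht).2]), Finset.sum_const, nsmul_eq_mul]
  unfold empDist
  field_simp

lemma empDist_isDist {m : ℕ} (hm : 0 < m) (x : Fin m → X) : IsDist (empDist x) := by
  refine ⟨fun a => by unfold empDist; positivity, ?_⟩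
  have hm' : (m : ℝ) ≠ 0 := by positivity
  have := empDist_sum hm x (fun _ => 1)
  simp at this
  field_simp at this
  linarith

lemma empDist_pos {m : ℕ} (x : Fin m → X) (t : Fin m) : 0 < empDist x (x t) := by
  unfold empDist
  have h1 : 0 < m := Fin.pos t
  have : 0 < (Finset.univ.filter fun i => x i = x t).card :=
    Finset.card_pos.2 ⟨t, by simp⟩
  positivity

lemma empDist_zero {m : ℕ} (x : Fin m → X) (a : X) (h : ∀ t, x t ≠ a) : empDist x a = 0 := by
  unfold empDist
  simp [h]

lemma seqProb_exp {m : ℕ} (hm : 0 < m) (x : Fin m → X) (Q : X → ℝ) (h : ∀ t, 0 < Q (x t)) :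
    seqProb Q x = Real.exp (m * ∑ a, empDist x a * Real.log (Q a)) := by
  rw [← empDist_sum hm x (fun a => Real.log (Q a)), Real.exp_sum]
  unfold seqProb
  exact Finset.prod_congr rfl fun t _ => (Real.exp_log (h t)).symm

lemma seqProb_nonneg {m : ℕ} {Q : X → ℝ} (hQ : ∀ a, 0 ≤ Q a) (x : Fin m → X) :
    0 ≤ seqProb Q x := Finset.prod_nonneg fun _ _ => hQ _

lemma sum_seqProb {m : ℕ} {Q : X → ℝ} (hQ : IsDist Q) : ∑ x : Fin m → X, seqProb Q x = 1 := by
  unfold seqProb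
  rw [← Fintype.piFinset_univ, ← Finset.prod_univ_sum (f := fun _ => Q)]
  simp [hQ.2]

lemma type_bound {N n : ℕ} (hN : 0 < N) (hn : 0 < n) {α : ℝ} (hα : 0 < α) (hNn : α * n ≤ N)
    {Q : X → ℝ} (hQ : IsDist Q) (x : Fin N → X) (y : Fin n → X) :
    seqProb Q x * seqProb Q y ≤ seqProb (empDist x) x * seqProb (empDist y) y *
      Real.exp (-(n * GJS (empDist x) (empDist y) α)) := by
  have dx := empDist_isDist hN x
  have dy := empDist_isDist hn y
  by_cases h : (∀ t, 0 < Q (x t)) ∧ (∀ t, 0 < Q (y t))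
  · obtain ⟨h1, h2⟩ := h
    rw [seqProb_exp hN x Q h1, seqProb_exp hn y Q h2, seqProb_exp hN x _ (empDist_pos x),
      seqProb_exp hn y _ (empDist_pos y), ← Real.exp_add, ← Real.exp_add, ← Real.exp_add]
    apply Real.exp_le_exp.2
    have ax : ∀ a, Q a = 0 → empDist x a = 0 := fun a ha =>
      empDist_zero x a fun t ht => by have := h1 t; rw [ht, ha] at this; exact lt_irrefl _ this
    have ay : ∀ a, Q a = 0 → empDist y a = 0 := fun a ha =>
      empDist_zero y a fun t ht => by have := h2 t; rw [ht, ha] at this; exact lt_irrefl _ this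
    have k1 := mul_le_mul_of_nonneg_left (gibbs dx hQ ax) (sub_nonneg.2 hNn)
    have k2 := mul_le_mul_of_nonneg_left (gjs_min hα dx dy hQ ax ay) (Nat.cast_nonneg (α := ℝ) n)
    linarith
  · have : seqProb Q x * seqProb Q y = 0 := by
      rw [not_and_or] at h
      rcases h with h | h <;> push Not at h <;> obtain ⟨t, ht⟩ := h
      · have : seqProb Q x = 0 :=
          Finset.prod_eq_zero (Finset.mem_univ t) (le_antisymm ht (hQ.1 _))
        rw [this, zero_mul]
      · have : seqProb Q y = 0 :=
          Finset.prod_eq_zero (Finset.mem_univ t) (le_antisymm ht (hQ.1 _))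
        rw [this, mul_zero]
    rw [this]
    have := seqProb_nonneg dx.1 x
    have := seqProb_nonneg dy.1 y
    positivity

lemma sum_ml {m : ℕ} (hm : 0 < m) :
    ∑ x : Fin m → X, seqProb (empDist x) x ≤ ((m : ℝ) + 1) ^ (Fintype.card X) := by
  classical
  set S : Finset (X → ℝ) := Finset.univ.image (fun x : Fin m → X => empDist x) with hS
  have h1 : ∑ x : Fin m → X, seqProb (empDist x) x =
      ∑ T ∈ S, ∑ x ∈ Finset.univ.filter (fun x : Fin m → X => empDist x = T),
        seqProb (empDist x) x :=
    (Finset.sum_fiberwise_of_maps_to (fun x _ => Finset.mem_image_of_mem _ (Finset.mem_univ x)) _).symm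
  have h2 : ∀ T ∈ S, ∑ x ∈ Finset.univ.filter (fun x : Fin m → X => empDist x = T),
        seqProb (empDist x) x ≤ 1 := by
    intro T hT
    obtain ⟨x0, -, rfl⟩ := Finset.mem_image.1 hT
    have d := empDist_isDist hm x0
    rw [Finset.sum_congr rfl (g := fun x => seqProb (empDist x0) x)
      (fun x hx => by rw [(Finset.mem_filter.1 hx).2])]
    rw [← sum_seqProb (m := m) d]
    exact Finset.sum_le_sum_of_subset_of_nonneg (Finset.filter_subset _ _)
      fun x _ _ => seqProb_nonneg d.1 x
  have h3 : S.card ≤ (m + 1) ^ (Fintype.card X) := by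
    have : S ⊆ (Finset.univ : Finset (X → Fin (m + 1))).image
        (fun c a => ((c a : ℕ) : ℝ) / m) := by
      intro T hT
      obtain ⟨x0, -, rfl⟩ := Finset.mem_image.1 hT
      refine Finset.mem_image.2 ⟨fun a => ⟨(Finset.univ.filter fun i => x0 i = a).card, ?_⟩,
        Finset.mem_univ _, ?_⟩
      · have := Finset.card_filter_le (Finset.univ : Finset (Fin m)) (fun i => x0 i = a)
        simp only [Finset.card_univ, Fintype.card_fin] at this
        omega
      · ext a; rfl
    refine (Finset.card_le_card this).trans (Finset.card_image_le.trans ?_)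
    simp
  rw [h1]
  calc _ ≤ ∑ T ∈ S, (1:ℝ) := Finset.sum_le_sum h2
    _ = S.card := by simp
    _ ≤ _ := by exact_mod_cast h3

/-! ### Bridge to the product space -/

abbrev IX (M N n : ℕ) : Type := (Fin M × Fin N) ⊕ Fin n

def pp {M : ℕ} (N n : ℕ) (P : Fin M → X → ℝ) (j : Fin M) : IX M N n → X → ℝ :=
  Sum.elim (fun lt => P lt.1) (fun _ => P j)

lemma pp_dist {M : ℕ} (N n : ℕ) {P : Fin M → X → ℝ} (hP : ∀ i, IsDist (P i)) (j : Fin M) :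
    ∀ k, IsDist (pp N n P j k) := by
  rintro (k | k)
  · exact hP _
  · exact hP _

def ixEquiv (X : Type*) (M N n : ℕ) :
    ((Fin M → Fin N → X) × (Fin n → X)) ≃ (IX M N n → X) where
  toFun q := Sum.elim (fun lt => q.1 lt.1 lt.2) q.2
  invFun z := (fun i t => z (Sum.inl (i, t)), fun t => z (Sum.inr t))
  left_inv q := by rfl
  right_inv z := by ext (k | k) <;> rfl

lemma prHjM_eq (M : ℕ) (α : ℝ) (n : ℕ) (P : Fin M → X → ℝ) (j : Fin M)
    (E : (Fin M → Fin (trainLen α n) → X) → (Fin n → X) → Prop) :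
    prHjM M α n P j E = PR (pp (trainLen α n) n P j)
      (fun z => E (fun i t => z (Sum.inl (i, t))) (fun t => z (Sum.inr t))) := by
  classical
  unfold prHjM PR EE
  rw [← (ixEquiv X M (trainLen α n) n).sum_comp, Fintype.sum_prod_type]
  refine Finset.sum_congr rfl fun xs _ => Finset.sum_congr rfl fun y _ => ?_
  change (if E xs y then (∏ i, ∏ t, P i (xs i t)) * ∏ t, P j (y t) else 0) =
    (∏ k, pp (trainLen α n) n P j k (Sum.elim (fun lt => xs lt.1 lt.2) y k)) *
      (if E xs y then 1 else 0)
  rw [Fintype.prod_sum_type, Fintype.prod_prod_type]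
  simp only [pp, Sum.elim_inl, Sum.elim_inr]
  split_ifs <;> simp

lemma prHjM_total (M : ℕ) (α : ℝ) (n : ℕ) {P : Fin M → X → ℝ} (hP : ∀ i, IsDist (P i))
    (j : Fin M) : prHjM M α n P j (fun _ _ => True) = 1 := by
  rw [prHjM_eq]
  unfold PR; simpa using EE_one (pp_dist _ _ hP j)

lemma trainLen_ge {α : ℝ} (n : ℕ) : α * n ≤ trainLen α n := Nat.le_ceil _

lemma trainLen_lt {α : ℝ} (hα : 0 < α) (n : ℕ) : (trainLen α n : ℝ) < α * n + 1 :=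
  Nat.ceil_lt_add_one (by positivity)

lemma trainLen_pos {α : ℝ} (hα : 0 < α) {n : ℕ} (hn : 0 < n) : 0 < trainLen α n :=
  Nat.ceil_pos.2 (by positivity)

lemma gutman_err (M : ℕ) [NeZero M] {α : ℝ} (hα : 0 < α) (lam : ℝ) {n : ℕ} (hn : 0 < n)
    {Q : Fin M → X → ℝ} (hQ : ∀ i, IsDist (Q i)) (j : Fin M) :
    betaM (gutmanM M α lam n) Q j ≤ ((trainLen α n : ℝ) + 1) ^ (Fintype.card X) *
      ((n : ℝ) + 1) ^ (Fintype.card X) * Real.exp (-(n * lam)) := by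
  have hN := trainLen_pos hα hn
  set N := trainLen α n with hNdef
  have hev : ∀ (xs : Fin M → Fin N → X) (y : Fin n → X),
      (gutmanM M α lam n xs y ≠ some j ∧ gutmanM M α lam n xs y ≠ none) →
      lam ≤ GJS (empDist (xs j)) (empDist y) α := by
    intro xs y ⟨h1, h2⟩
    by_contra hlt
    push Not at hlt
    unfold gutmanM at h1 h2
    split_ifs at h1 h2 with ha hb
    · exact h2 rfl
    · apply h1
      congr 1
      by_contra hne
      exact ha ⟨_, _, hne, hb.choose_spec, hlt.le⟩
    · exact hb ⟨j, hlt.le⟩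
  set F : Fin M → (Fin N → X) → ℝ :=
    Function.update (fun i x => seqProb (Q i) x) j (fun x => seqProb (empDist x) x) with hF
  have hFnn : ∀ i x, 0 ≤ F i x := by
    intro i x
    by_cases h : i = j
    · subst h; simp only [hF, Function.update_self]
      exact seqProb_nonneg (empDist_isDist hN x).1 x
    · simp only [hF, Function.update_of_ne h]; exact seqProb_nonneg (hQ i).1 x
  have hpt : ∀ (xs : Fin M → Fin N → X) (y : Fin n → X),
      (if gutmanM M α lam n xs y ≠ some j ∧ gutmanM M α lam n xs y ≠ none then
        (∏ i, seqProb (Q i) (xs i)) * seqProb (Q j) y else 0) ≤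
      (∏ i, F i (xs i)) * (seqProb (empDist y) y * Real.exp (-(n * lam))) := by
    intro xs y
    have hy := seqProb_nonneg (empDist_isDist hn y).1 y
    split_ifs with h
    · have hl := hev xs y h
      have tb := type_bound hN hn hα (trainLen_ge n) (hQ j) (xs j) y
      have e1 : ∏ i, seqProb (Q i) (xs i) =
          seqProb (Q j) (xs j) * ∏ i ∈ Finset.univ.erase j, seqProb (Q i) (xs i) :=
        (Finset.mul_prod_erase _ _ (Finset.mem_univ j)).symm
      have e2 : ∏ i, F i (xs i) =
          seqProb (empDist (xs j)) (xs j) * ∏ i ∈ Finset.univ.erase j, seqProb (Q i) (xs i) := by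
        rw [← Finset.mul_prod_erase _ _ (Finset.mem_univ j)]
        congr 1
        · simp [hF]
        · refine Finset.prod_congr rfl fun i hi => ?_
          simp only [hF, Function.update_of_ne (Finset.ne_of_mem_erase hi)]
      rw [e1, e2]
      have hR : 0 ≤ ∏ i ∈ Finset.univ.erase j, seqProb (Q i) (xs i) :=
        Finset.prod_nonneg fun i _ => seqProb_nonneg (hQ i).1 _
      have hx := seqProb_nonneg (empDist_isDist hN (xs j)).1 (xs j)
      calc seqProb (Q j) (xs j) * (∏ i ∈ Finset.univ.erase j, seqProb (Q i) (xs i)) *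
            seqProb (Q j) y
          = (seqProb (Q j) (xs j) * seqProb (Q j) y) *
            ∏ i ∈ Finset.univ.erase j, seqProb (Q i) (xs i) := by ring
        _ ≤ (seqProb (empDist (xs j)) (xs j) * seqProb (empDist y) y *
              Real.exp (-(n * lam))) * ∏ i ∈ Finset.univ.erase j, seqProb (Q i) (xs i) := by
            refine mul_le_mul_of_nonneg_right (tb.trans ?_) hR
            gcongr
        _ = _ := by ring
    · exact mul_nonneg (Finset.prod_nonneg fun i _ => hFnn i _) (by positivity)
  have hsumF : ∑ xs : Fin M → Fin N → X, ∏ i, F i (xs i) ≤ ((N : ℝ) + 1) ^ (Fintype.card X) := by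
    rw [← Fintype.piFinset_univ, ← Finset.prod_univ_sum,
      ← Finset.mul_prod_erase _ _ (Finset.mem_univ j)]
    rw [Finset.prod_eq_one (s := Finset.univ.erase j), mul_one]
    · simp only [hF, Function.update_self]; exact sum_ml hN
    · intro i hi
      simp only [hF, Function.update_of_ne (Finset.ne_of_mem_erase hi)]
      exact sum_seqProb (hQ i)
  have hsumF0 : 0 ≤ ∑ xs : Fin M → Fin N → X, ∏ i, F i (xs i) :=
    Finset.sum_nonneg fun xs _ => Finset.prod_nonneg fun i _ => hFnn i _
  unfold betaM
  calc _ ≤ ∑ xs : Fin M → Fin N → X, ∑ y : Fin n → X,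
        (∏ i, F i (xs i)) * (seqProb (empDist y) y * Real.exp (-(n * lam))) :=
        Finset.sum_le_sum fun xs _ => Finset.sum_le_sum fun y _ => hpt xs y
    _ = (∑ xs : Fin M → Fin N → X, ∏ i, F i (xs i)) *
        (∑ y : Fin n → X, seqProb (empDist y) y) * Real.exp (-(n * lam)) := by
        rw [Finset.sum_mul, Finset.sum_mul]
        refine Finset.sum_congr rfl fun xs _ => ?_
        rw [Finset.mul_sum, Finset.sum_mul]
        exact Finset.sum_congr rfl fun y _ => by ring
    _ ≤ _ := by
        have hy0 : 0 ≤ ∑ y : Fin n → X, seqProb (empDist y) y :=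
          Finset.sum_nonneg fun y _ => seqProb_nonneg (empDist_isDist hn y).1 y
        exact mul_le_mul_of_nonneg_right (mul_le_mul hsumF (sum_ml (X := X) hn) hy0
          (by positivity)) (Real.exp_pos _).le

lemma gutman_rej (M : ℕ) [NeZero M] (α lam : ℝ) (n : ℕ)
    {P : Fin M → X → ℝ} (hP : ∀ i, IsDist (P i)) (k : Fin M) :
    zetaM (gutmanM M α lam n) P k ≤
      prHjM M α n P k (fun xs y => ∃ i, i ≠ k ∧ GJS (empDist (xs i)) (empDist y) α ≤ lam) := by
  unfold zetaM prHjM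
  refine Finset.sum_le_sum fun xs _ => Finset.sum_le_sum fun y _ => ?_
  have hnn : 0 ≤ (∏ i, seqProb (P i) (xs i)) * seqProb (P k) y :=
    mul_nonneg (Finset.prod_nonneg fun i _ => seqProb_nonneg (hP i).1 _)
      (seqProb_nonneg (hP k).1 _)
  by_cases h : gutmanM M α lam n xs y = none
  · have : ∃ i, i ≠ k ∧ GJS (empDist (xs i)) (empDist y) α ≤ lam := by
      unfold gutmanM at h
      split_ifs at h with ha
      obtain ⟨i, l, hil, h1, h2⟩ := ha
      by_cases hik : i = k
      · exact ⟨l, fun hlk => hil (hik.trans hlk.symm), h2⟩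
      · exact ⟨i, hik, h1⟩
    rw [if_pos h, if_pos this]
  · rw [if_neg h]; split_ifs <;> [exact hnn; exact le_rfl]

/-- the sum statistic -/
noncomputable def gg {M : ℕ} (N n : ℕ) (i : Fin M) (c : ℝ) (u v : X → ℝ) : IX M N n → X → ℝ :=
  Sum.elim (fun lt a => if lt.1 = i then c * u a else 0) (fun _ a => v a)

lemma gg_sum {M N n : ℕ} (i : Fin M) (c : ℝ) (u v : X → ℝ) (z : IX M N n → X) :
    ∑ k, gg N n i c u v k (z k) =
      c * ∑ t, u (z (Sum.inl (i, t))) + ∑ t, v (z (Sum.inr t)) := by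
  rw [Fintype.sum_sum_type, Fintype.sum_prod_type]
  simp only [gg, Sum.elim_inl, Sum.elim_inr]
  congr 1
  rw [Finset.sum_eq_single i]
  · simp [Finset.mul_sum]
  · intro b _ hb; simp [hb]
  · simp

lemma gg_mean {M N n : ℕ} (P : Fin M → X → ℝ) (j i : Fin M) (c : ℝ) (u v : X → ℝ) :
    ∑ k, ∑ a, pp N n P j k a * gg N n i c u v k a =
      c * N * expect (P i) u + n * expect (P j) v := by
  rw [Fintype.sum_sum_type, Fintype.sum_prod_type]
  simp only [gg, pp, Sum.elim_inl, Sum.elim_inr]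
  congr 1
  · rw [Finset.sum_eq_single i]
    · simp only [if_true, expect, Finset.mul_sum, Finset.sum_const, Finset.card_univ,
        Fintype.card_fin, nsmul_eq_mul]
      exact Finset.sum_congr rfl fun a _ => by ring
    · intro b _ hb; simp [hb]
    · simp
  · simp [expect]

lemma gg_var {M N n : ℕ} {P : Fin M → X → ℝ} (j i : Fin M)
    (c : ℝ) (u v : X → ℝ) :
    ∑ k, ∑ a, pp N n P j k a * (gg N n i c u v k a - ∑ b, pp N n P j k b * gg N n i c u v k b) ^ 2
      = c ^ 2 * N * varD (P i) u + n * varD (P j) v := by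
  rw [Fintype.sum_sum_type, Fintype.sum_prod_type]
  simp only [gg, pp, Sum.elim_inl, Sum.elim_inr]
  congr 1
  · rw [Finset.sum_eq_single i]
    · simp only [if_true, Finset.sum_const, Finset.card_univ,
        Fintype.card_fin, nsmul_eq_mul]
      have e : ∑ b, P i b * (c * u b) = c * expect (P i) u := by
        simp only [expect, Finset.mul_sum]
        exact Finset.sum_congr rfl fun a _ => by ring
      rw [e]
      simp only [varD]
      conv_rhs => rw [expect]
      rw [Finset.mul_sum, Finset.mul_sum]
      exact Finset.sum_congr rfl fun a _ => by ring
    · intro b _ hb; simp [hb]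
    · simp
  · simp [expect, varD]

lemma expect_abs_le {Q : X → ℝ} (hQ : IsDist Q) (f : X → ℝ) {B : ℝ} (h : ∀ a, |f a| ≤ B) :
    |∑ a, Q a * f a| ≤ B := by
  calc |∑ a, Q a * f a| ≤ ∑ a, |Q a * f a| := Finset.abs_sum_le_sum_abs _ _
    _ ≤ ∑ a, Q a * B := Finset.sum_le_sum fun a _ => by
        rw [abs_mul, abs_of_nonneg (hQ.1 a)]; exact mul_le_mul_of_nonneg_left (h a) (hQ.1 a)
    _ = B := by rw [← Finset.sum_mul, hQ.2, one_mul]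

lemma gg_bound {M N n : ℕ} {P : Fin M → X → ℝ} (hP : ∀ i, IsDist (P i)) (j i : Fin M)
    {c : ℝ} (h0 : 0 ≤ c) (h1 : c ≤ 1) (u v : X → ℝ) (k : IX M N n) (a : X) :
    |gg N n i c u v k a - ∑ b, pp N n P j k b * gg N n i c u v k b| ≤
      2 * (∑ a, |u a| + ∑ a, |v a|) := by
  have hu : ∀ a, |u a| ≤ ∑ a, |u a| := fun a =>
    Finset.single_le_sum (f := fun a => |u a|) (fun _ _ => abs_nonneg _) (Finset.mem_univ a)
  have hv : ∀ a, |v a| ≤ ∑ a, |v a| := fun a =>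
    Finset.single_le_sum (f := fun a => |v a|) (fun _ _ => abs_nonneg _) (Finset.mem_univ a)
  have nu : 0 ≤ ∑ a, |u a| := Finset.sum_nonneg fun _ _ => abs_nonneg _
  have nv : 0 ≤ ∑ a, |v a| := Finset.sum_nonneg fun _ _ => abs_nonneg _
  have hg : ∀ a, |gg N n i c u v k a| ≤ ∑ a, |u a| + ∑ a, |v a| := by
    intro a
    rcases k with k | k
    · simp only [gg, Sum.elim_inl]
      split_ifs
      · rw [abs_mul, abs_of_nonneg h0]
        have := mul_le_mul h1 (hu a) (abs_nonneg _) zero_le_one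
        linarith
      · rw [abs_zero]; linarith
    · simp only [gg, Sum.elim_inr]
      have := hv a; linarith
  have := expect_abs_le (pp_dist N n hP j k) _ hg
  have := abs_sub (gg N n i c u v k a) (∑ b, pp N n P j k b * gg N n i c u v k b)
  have := hg a
  linarith

/-- Converse step. -/
lemma converse_step (M : ℕ) {α : ℝ} (hα : 0 < α) (n : ℕ) (lam γ : ℝ)
    {P : Fin M → X → ℝ} (hP : ∀ i, IsDist (P i)) (i j : Fin M) (hij : i ≠ j) (e : ℝ)
    (ψ : MTest X M α n)
    (hβ : ∀ Q : Fin M → X → ℝ, (∀ i, IsDist (Q i)) → ∀ j,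
      betaM ψ Q j ≤ Real.exp (-((n : ℝ) * lam)))
    (hζ : zetaM ψ P j ≤ e) :
    prHjM M α n P j (fun xs y => 1 * ∑ t, iDens1 (P i) (P j) α (xs i t) +
      ∑ t, iDens2 (P i) (P j) α (y t) ≤ γ) ≤
      e + Real.exp (-((n : ℝ) * lam)) + Real.exp γ * Real.exp (-((n : ℝ) * lam)) := by
  classical
  set m := mix (P i) (P j) α with hm
  have hmd : IsDist m := mix_isDist hα (hP i) (hP j)
  set Q : Fin M → X → ℝ := Function.update P i m with hQ
  have hQd : ∀ l, IsDist (Q l) := by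
    intro l
    by_cases h : l = i
    · subst h; simpa [hQ] using hmd
    · simpa [hQ, Function.update_of_ne h] using hP l
  have b1 := hβ P hP j
  have b2 := hβ Q hQd i
  set A : (Fin M → Fin (trainLen α n) → X) → (Fin n → X) → ℝ :=
    fun xs y => (∏ i, seqProb (P i) (xs i)) * seqProb (P j) y with hA
  set B : (Fin M → Fin (trainLen α n) → X) → (Fin n → X) → ℝ :=
    fun xs y => (∏ i, seqProb (Q i) (xs i)) * seqProb (Q i) y with hB
  have hA0 : ∀ xs y, 0 ≤ A xs y := fun xs y =>
    mul_nonneg (Finset.prod_nonneg fun i _ => seqProb_nonneg (hP i).1 _)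
      (seqProb_nonneg (hP j).1 _)
  have hB0 : ∀ xs y, 0 ≤ B xs y := fun xs y =>
    mul_nonneg (Finset.prod_nonneg fun i _ => seqProb_nonneg (hQd i).1 _)
      (seqProb_nonneg (hQd i).1 _)
  have r1 : ∀ a, P i a = m a * Real.exp (iDens1 (P i) (P j) α a) ∨ P i a = 0 := by
    intro a
    by_cases h : P i a = 0
    · exact Or.inr h
    left
    have h1 : 0 < P i a := lt_of_le_of_ne ((hP i).1 a) (Ne.symm h)
    have h2 := (hP j).1 a
    have h3 : 0 < α * P i a + P j a := by positivity
    unfold iDens1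
    rw [Real.exp_log (by positivity), hm]
    unfold mix
    field_simp
  have r2 : ∀ a, P j a = m a * Real.exp (iDens2 (P i) (P j) α a) ∨ P j a = 0 := by
    intro a
    by_cases h : P j a = 0
    · exact Or.inr h
    left
    have h1 : 0 < P j a := lt_of_le_of_ne ((hP j).1 a) (Ne.symm h)
    have h2 := (hP i).1 a
    have h3 : 0 < α * P i a + P j a := by positivity
    unfold iDens2
    rw [Real.exp_log (by positivity), hm]
    unfold mix
    field_simp
  have q1 : ∀ x : Fin (trainLen α n) → X, seqProb (P i) x ≤
      seqProb m x * Real.exp (∑ t, iDens1 (P i) (P j) α (x t)) := by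
    intro x
    unfold seqProb
    rw [Real.exp_sum, ← Finset.prod_mul_distrib]
    refine Finset.prod_le_prod (fun t _ => (hP i).1 _) fun t _ => ?_
    rcases r1 (x t) with h | h
    · exact h.le
    · rw [h]; exact mul_nonneg (hmd.1 _) (Real.exp_pos _).le
  have q2 : ∀ y : Fin n → X, seqProb (P j) y ≤
      seqProb m y * Real.exp (∑ t, iDens2 (P i) (P j) α (y t)) := by
    intro x
    unfold seqProb
    rw [Real.exp_sum, ← Finset.prod_mul_distrib]
    refine Finset.prod_le_prod (fun t _ => (hP j).1 _) fun t _ => ?_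
    rcases r2 (x t) with h | h
    · exact h.le
    · rw [h]; exact mul_nonneg (hmd.1 _) (Real.exp_pos _).le
  have hAB : ∀ xs y, (1 * ∑ t, iDens1 (P i) (P j) α (xs i t) +
      ∑ t, iDens2 (P i) (P j) α (y t) ≤ γ) → A xs y ≤ Real.exp γ * B xs y := by
    intro xs y h
    simp only [hA, hB]
    rw [← Finset.mul_prod_erase _ (fun l => seqProb (P l) (xs l)) (Finset.mem_univ i),
      ← Finset.mul_prod_erase _ (fun l => seqProb (Q l) (xs l)) (Finset.mem_univ i)]
    have e1 : ∏ l ∈ Finset.univ.erase i, seqProb (Q l) (xs l) =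
        ∏ l ∈ Finset.univ.erase i, seqProb (P l) (xs l) := by
      refine Finset.prod_congr rfl fun l hl => ?_
      rw [hQ, Function.update_of_ne (Finset.ne_of_mem_erase hl)]
    have e2 : Q i = m := by simp [hQ]
    rw [e1, e2]
    set R := ∏ l ∈ Finset.univ.erase i, seqProb (P l) (xs l) with hR
    have hR0 : 0 ≤ R := Finset.prod_nonneg fun l _ => seqProb_nonneg (hP l).1 _
    have p1 := seqProb_nonneg hmd.1 (xs i)
    have p2 := seqProb_nonneg hmd.1 y
    calc seqProb (P i) (xs i) * R * seqProb (P j) y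
        ≤ (seqProb m (xs i) * Real.exp (∑ t, iDens1 (P i) (P j) α (xs i t))) * R *
          (seqProb m y * Real.exp (∑ t, iDens2 (P i) (P j) α (y t))) := by
          refine mul_le_mul (mul_le_mul_of_nonneg_right (q1 _) hR0) (q2 y)
            (seqProb_nonneg (hP j).1 _) (by positivity)
      _ = Real.exp (1 * ∑ t, iDens1 (P i) (P j) α (xs i t) +
          ∑ t, iDens2 (P i) (P j) α (y t)) * (seqProb m (xs i) * R * seqProb m y) := by
          rw [one_mul, Real.exp_add]; ring
      _ ≤ _ := mul_le_mul_of_nonneg_right (Real.exp_le_exp.2 h) (by positivity)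
  have key : prHjM M α n P j (fun xs y => 1 * ∑ t, iDens1 (P i) (P j) α (xs i t) +
      ∑ t, iDens2 (P i) (P j) α (y t) ≤ γ) ≤ zetaM ψ P j + betaM ψ P j +
        Real.exp γ * betaM ψ Q i := by
    unfold prHjM zetaM betaM
    rw [Finset.mul_sum, ← Finset.sum_add_distrib, ← Finset.sum_add_distrib]
    refine Finset.sum_le_sum fun xs _ => ?_
    rw [Finset.mul_sum, ← Finset.sum_add_distrib, ← Finset.sum_add_distrib]
    refine Finset.sum_le_sum fun y _ => ?_
    change (if _ then A xs y else 0) ≤ (if _ then A xs y else 0) + (if _ then A xs y else 0) +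
      Real.exp γ * (if _ then B xs y else 0)
    have ha := hA0 xs y
    have hb := mul_nonneg (Real.exp_pos γ).le (hB0 xs y)
    by_cases hE : 1 * ∑ t, iDens1 (P i) (P j) α (xs i t) + ∑ t, iDens2 (P i) (P j) α (y t) ≤ γ
    · rw [if_pos hE]
      have hab := hAB xs y hE
      by_cases h1 : ψ xs y = none
      · simp [h1]
      · by_cases h2 : ψ xs y = some j
        · have : ψ xs y ≠ some i ∧ ψ xs y ≠ none := by
            rw [h2]; simp [Ne.symm hij]
          rw [if_pos this]
          simp [h2]; exact hab
        · rw [if_neg h1, if_pos ⟨h2, h1⟩]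
          split_ifs
          · linarith
          · simp
    · rw [if_neg hE]
      split_ifs <;> positivity
  have := mul_le_mul_of_nonneg_left b2 (Real.exp_pos γ).le
  linarith


set_option maxHeartbeats 2000000 in
lemma asym_core (b V V1 D L : ℝ) (hV : 0 < V) (hV1 : 0 ≤ V1) (hD : 0 ≤ D) (hL : 0 ≤ L) :
    ∃ C : ℝ, 0 ≤ C ∧ ∃ n0 : ℕ, ∀ n : ℕ, n0 ≤ n → 0 < n ∧ ∀ s2 : ℝ, |s2 - n * V| ≤ V1 →
      0 < s2 ∧ ∀ F : ℝ → ℝ, Monotone F →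
        (∀ r, F (Real.sqrt s2 * r) ≤ stdCDF r + 14 * (D / Real.sqrt s2) ∧
          stdCDF r - 14 * (D / Real.sqrt s2) ≤ F (Real.sqrt s2 * r)) →
        F (Real.sqrt n * Real.sqrt V * b - C) ≤ stdCDF b - L / Real.sqrt n ∧
        stdCDF b + L / Real.sqrt n ≤ F (Real.sqrt n * Real.sqrt V * b + C) := by
  obtain ⟨c0, hc0, hlow⟩ := stdCDF_lower b
  have hw : 0 < Real.sqrt V := Real.sqrt_pos.2 hV
  have hw2 : 0 < Real.sqrt (V / 2) := Real.sqrt_pos.2 (by linarith)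
  set w := Real.sqrt V with hwdef
  set w2 := Real.sqrt (V / 2) with hw2def
  set K1 := 14 * (D / w2) with hK1
  have hK1' : 0 ≤ K1 := by positivity
  set K2 := V1 / w with hK2
  have hK2' : 0 ≤ K2 := by positivity
  set A := (K1 + L) / c0 with hA
  have hA' : 0 ≤ A := by positivity
  refine ⟨K2 * |b| + A * (w + K2), by positivity,
    ⌈2 * V1 / V⌉₊ + ⌈A ^ 2⌉₊ + 1, fun n hn => ?_⟩
  have hnpos : 0 < n := by omega
  have hnR : (1 : ℝ) ≤ n := by exact_mod_cast hnpos
  have hcast : ((⌈2 * V1 / V⌉₊ + ⌈A ^ 2⌉₊ + 1 : ℕ) : ℝ) ≤ n := by exact_mod_cast hn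
  push_cast at hcast
  have hc1 := Nat.le_ceil (2 * V1 / V)
  have hc2 := Nat.le_ceil (A ^ 2)
  have p1 : (0:ℝ) ≤ ⌈2 * V1 / V⌉₊ := by positivity
  have p2 : (0:ℝ) ≤ ⌈A ^ 2⌉₊ := by positivity
  have hn1 : 2 * V1 / V ≤ n := by linarith
  have hn2 : A ^ 2 ≤ n := by linarith
  refine ⟨hnpos, fun s2 hs2 => ?_⟩
  rw [div_le_iff₀ hV] at hn1
  have hs2' := abs_le.1 hs2
  have hs2low : n * (V / 2) ≤ s2 := by linarith
  have hs2pos : 0 < s2 := lt_of_lt_of_le (by positivity) hs2low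
  refine ⟨hs2pos, fun F hF hbe => ?_⟩
  set q := Real.sqrt n with hq
  have hq1 : 1 ≤ q := by rw [hq]; exact Real.one_le_sqrt.2 hnR
  have hq0 : 0 < q := by linarith
  have hqA : A ≤ q := Real.le_sqrt_of_sq_le hn2
  set s := Real.sqrt s2 with hs
  have hs0 : 0 < s := Real.sqrt_pos.2 hs2pos
  have hsl : q * w2 ≤ s := by
    rw [hq, hw2def, ← Real.sqrt_mul (by positivity)]
    exact Real.sqrt_le_sqrt hs2low
  have hDs : 14 * (D / s) ≤ K1 / q := by
    have : D / s ≤ D / (q * w2) := by gcongr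
    calc 14 * (D / s) ≤ 14 * (D / (q * w2)) := by linarith
      _ = K1 / q := by rw [hK1]; field_simp
  have hss : s ^ 2 = s2 := Real.sq_sqrt hs2pos.le
  have hqq : (q * w) ^ 2 = n * V := by
    rw [mul_pow, hq, hwdef, Real.sq_sqrt (by positivity), Real.sq_sqrt hV.le]
  have hqw : w ≤ q * w := by nlinarith
  have hdiff : |s - q * w| ≤ K2 := by
    rw [hK2, le_div_iff₀ hw]
    have e : |s - q * w| * (s + q * w) ≤ V1 := by
      have : |s - q * w| * (s + q * w) = |s2 - n * V| := by
        rw [← hss, ← hqq, ← abs_of_pos (show 0 < s + q * w by positivity), ← abs_mul]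
        congr 1; ring
      linarith
    have := abs_nonneg (s - q * w)
    nlinarith
  have hd := abs_le.1 hdiff
  have hsq : s / q ≤ w + K2 := by
    rw [div_le_iff₀ hq0]; nlinarith
  have hbK : |(s - q * w) * b| ≤ K2 * |b| := by
    rw [abs_mul]; exact mul_le_mul_of_nonneg_right hdiff (abs_nonneg _)
  have hbK' := abs_le.1 hbK
  have hAq : A / q ≤ 1 := (div_le_one hq0).2 hqA
  have hAq0 : 0 ≤ A / q := by positivity
  have hsA : s * (A / q) ≤ A * (w + K2) := by
    have : s * (A / q) = A * (s / q) := by ring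
    rw [this]; exact mul_le_mul_of_nonneg_left hsq hA'
  have hcA : c0 * (A / q) = K1 / q + L / q := by rw [hA]; field_simp
  constructor
  · have h1 := (hbe (b - A / q)).1
    have h2 := hlow (b - A / q) b (by linarith) (by linarith) (by linarith)
    have h3 : F (q * w * b - (K2 * |b| + A * (w + K2))) ≤ F (s * (b - A / q)) := by
      have e1 : s * (b - A / q) = q * w * b + (s - q * w) * b - s * (A / q) := by ring
      apply hF; rw [e1]; linarith [hbK'.1]
    have h4 : c0 * (b - (b - A / q)) = K1 / q + L / q := by rw [← hcA]; ring
    linarith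
  · have h1 := (hbe (b + A / q)).2
    have h2 := hlow b (b + A / q) (by linarith) (by linarith) (by linarith)
    have h3 : F (s * (b + A / q)) ≤ F (q * w * b + (K2 * |b| + A * (w + K2))) := by
      have e1 : s * (b + A / q) = q * w * b + (s - q * w) * b + s * (A / q) := by ring
      apply hF; rw [e1]; linarith [hbK'.2]
    have h4 : c0 * ((b + A / q) - b) = K1 / q + L / q := by rw [← hcA]; ring
    linarith

lemma varD_nonneg {Q : X → ℝ} (hQ : IsDist Q) (f : X → ℝ) : 0 ≤ varD Q f :=
  Finset.sum_nonneg fun x _ => mul_nonneg (hQ.1 x) (sq_nonneg _)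

lemma asym2 {M : ℕ} {P : Fin M → X → ℝ} (hP : ∀ i, IsDist (P i)) (i j : Fin M)
    (u v : X → ℝ) (V e L : ℝ) (hV : 0 < V) (he : e ∈ Set.Ioo (0 : ℝ) 1) (hL : 0 ≤ L) :
    ∃ C : ℝ, 0 ≤ C ∧ ∃ n0 : ℕ, ∀ n : ℕ, n0 ≤ n → 0 < n ∧ ∀ (N : ℕ) (c : ℝ), 0 ≤ c → c ≤ 1 →
      |c ^ 2 * N * varD (P i) u + n * varD (P j) v - n * V| ≤ varD (P i) u →
      PR (pp N n P j) (fun z => ∑ k, gg N n i c u v k (z k) ≤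
        c * N * expect (P i) u + n * expect (P j) v +
          (Real.sqrt n * Real.sqrt V * stdCDFInv e - C)) ≤ e - L / Real.sqrt n ∧
      e + L / Real.sqrt n ≤ PR (pp N n P j) (fun z => ∑ k, gg N n i c u v k (z k) ≤
        c * N * expect (P i) u + n * expect (P j) v +
          (Real.sqrt n * Real.sqrt V * stdCDFInv e + C)) := by
  have hD0 : 0 ≤ 2 * (∑ a, |u a| + ∑ a, |v a|) := by
    have : 0 ≤ ∑ a, |u a| := Finset.sum_nonneg fun _ _ => abs_nonneg _
    have : 0 ≤ ∑ a, |v a| := Finset.sum_nonneg fun _ _ => abs_nonneg _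
    linarith
  obtain ⟨C, hC, n0, h⟩ := asym_core (stdCDFInv e) V (varD (P i) u)
    (2 * (∑ a, |u a| + ∑ a, |v a|)) L hV (varD_nonneg (hP i) u) hD0 hL
  rw [stdCDF_inv he] at h
  refine ⟨C, hC, n0, fun n hn => ⟨(h n hn).1, fun N c hc0 hc1 hs => ?_⟩⟩
  obtain ⟨hs2, h2⟩ := (h n hn).2 _ hs
  have hpp := pp_dist N n hP j
  refine h2 (fun t => PR (pp N n P j) (fun z => ∑ k, gg N n i c u v k (z k) ≤
        c * N * expect (P i) u + n * expect (P j) v + t)) ?_ ?_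
  · intro a b hab
    exact PR_mono hpp fun x hx => by linarith
  · intro r
    refine be_main hpp (gg N n i c u v) _ _ _ r (gg_mean P j i c u v).symm
      (Real.sqrt_pos.2 hs2) ?_ hD0 (gg_bound hP j i hc0 hc1 u v)
    rw [gg_var, Real.sq_sqrt hs2.le]

/-- converse-type lower bound -/
lemma conv_low {M : ℕ} {α : ℝ} (hα : 0 < α) {P : Fin M → X → ℝ} (hP : ∀ i, IsDist (P i))
    (i j : Fin M) (e L : ℝ) (hV : 0 < disp (P i) (P j) α)
    (he : e ∈ Set.Ioo (0 : ℝ) 1) (hL : 0 ≤ L) :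
    ∃ C : ℝ, 0 ≤ C ∧ ∃ n0 : ℕ, ∀ n : ℕ, n0 ≤ n → 0 < n ∧
      e + L / Real.sqrt n ≤ prHjM M α n P j (fun xs y =>
        1 * ∑ t, iDens1 (P i) (P j) α (xs i t) + ∑ t, iDens2 (P i) (P j) α (y t) ≤
          n * GJS (P i) (P j) α +
            Real.sqrt n * Real.sqrt (disp (P i) (P j) α) * stdCDFInv e + C) := by
  set u := iDens1 (P i) (P j) α with hu
  set v := iDens2 (P i) (P j) α with hv
  obtain ⟨C, hC, n0, h⟩ := asym2 hP i j u v _ e L hV he hL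
  refine ⟨C + |expect (P i) u|, by positivity, n0, fun n hn => ⟨(h n hn).1, ?_⟩⟩
  have hN1 := trainLen_ge (α := α) n
  have hN2 := trainLen_lt hα n
  have hv1 := varD_nonneg (hP i) u
  have h2 := ((h n hn).2 (trainLen α n) 1 zero_le_one le_rfl ?_).2
  · refine h2.trans ?_
    rw [prHjM_eq]
    refine PR_mono (pp_dist _ _ hP j) fun z hz => ?_
    rw [gg_sum] at hz
    refine hz.trans ?_
    rw [GJS_expect]
    have h3 : ((trainLen α n : ℝ) - α * n) * expect (P i) u ≤ |expect (P i) u| := by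
      calc _ ≤ |((trainLen α n : ℝ) - α * n) * expect (P i) u| := le_abs_self _
        _ = |(trainLen α n : ℝ) - α * n| * |expect (P i) u| := abs_mul _ _
        _ ≤ 1 * |expect (P i) u| := by
          refine mul_le_mul_of_nonneg_right ?_ (abs_nonneg _)
          rw [abs_le]; constructor <;> linarith
        _ = _ := one_mul _
    rw [← hu, ← hv]
    nlinarith
  · have e1 : (1:ℝ) ^ 2 * (trainLen α n : ℝ) * varD (P i) u + n * varD (P j) v -
        n * disp (P i) (P j) α = ((trainLen α n : ℝ) - α * n) * varD (P i) u := by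
      unfold disp; rw [← hu, ← hv]; ring
    rw [e1, abs_of_nonneg (mul_nonneg (by linarith) hv1)]
    nlinarith

lemma gjs_to_gg {M : ℕ} {α : ℝ} (hα : 0 < α) {n : ℕ} (hn : 0 < n) {P : Fin M → X → ℝ}
    (hP : ∀ i, IsDist (P i)) (i j : Fin M) (τ : ℝ) :
    prHjM M α n P j (fun xs y => GJS (empDist (xs i)) (empDist y) α ≤ τ) ≤
    PR (pp (trainLen α n) n P j) (fun z => ∑ k, gg (trainLen α n) n i (α * n / trainLen α n)
      (iDens1 (P i) (P j) α) (iDens2 (P i) (P j) α) k (z k) ≤ n * τ) := by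
  rw [prHjM_eq]
  refine PR_mono_supp (pp_dist _ _ hP j) fun z hz hE => ?_
  have hN := trainLen_pos hα hn
  have hN' : (0:ℝ) < trainLen α n := by exact_mod_cast hN
  have hn' : (0:ℝ) < n := by exact_mod_cast hn
  rw [gg_sum]
  have h1 := empDist_sum hN (fun t => z (Sum.inl (i, t))) (iDens1 (P i) (P j) α)
  have h2 := empDist_sum hn (fun t => z (Sum.inr t)) (iDens2 (P i) (P j) α)
  have h3 := gjs_lin (T1 := empDist fun t => z (Sum.inl (i, t)))
    (T2 := empDist fun t => z (Sum.inr t)) (P1 := P i) (P2 := P j) hα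
    (empDist_isDist hN _).1 (empDist_isDist hn _).1 (hP i).1 (hP j).1
    (fun x hx => empDist_zero _ _ fun t ht => by
      have := hz (Sum.inl (i, t)); simp only [pp, Sum.elim_inl] at this
      rw [ht, hx] at this; exact lt_irrefl _ this)
    (fun x hx => empDist_zero _ _ fun t ht => by
      have := hz (Sum.inr t); simp only [pp, Sum.elim_inr] at this
      rw [ht, hx] at this; exact lt_irrefl _ this)
  rw [h1, h2]
  have h4 := mul_le_mul_of_nonneg_left (h3.trans hE) hn'.le
  refine le_trans (le_of_eq ?_) h4
  field_simp

lemma c_facts {α : ℝ} (hα : 0 < α) {n : ℕ} (hn : 0 < n) :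
    0 ≤ α * n / trainLen α n ∧ α * n / trainLen α n ≤ 1 ∧
    α * n / trainLen α n * trainLen α n = α * n ∧
    ∃ d : ℝ, 0 ≤ d ∧ d ≤ 1 ∧ (α * n / trainLen α n) ^ 2 * trainLen α n = α * n - d := by
  have hN := trainLen_pos hα hn
  have hN' : (0:ℝ) < trainLen α n := by exact_mod_cast hN
  have hn' : (0:ℝ) < n := by exact_mod_cast hn
  have hN1 := trainLen_ge (α := α) n
  have hN2 := trainLen_lt hα n
  have hc1 : α * n / trainLen α n ≤ 1 := (div_le_one hN').2 hN1
  have hc0 : 0 ≤ α * n / trainLen α n := by positivity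
  have hcN : α * n / trainLen α n * trainLen α n = α * n := div_mul_cancel₀ _ hN'.ne'
  refine ⟨hc0, hc1, hcN, α * n / trainLen α n * (trainLen α n - α * n), ?_, ?_, ?_⟩
  · exact mul_nonneg hc0 (by linarith)
  · nlinarith
  · rw [pow_two, mul_assoc, hcN]; rw [mul_sub, hcN]; ring


lemma cheb_one {M : ℕ} {α : ℝ} (hα : 0 < α) {P : Fin M → X → ℝ} (hP : ∀ i, IsDist (P i))
    (l k : Fin M) (G B : ℝ) (hG : G < GJS (P l) (P k) α) :
    ∃ L : ℝ, 0 ≤ L ∧ ∃ n0 : ℕ, ∀ n : ℕ, n0 ≤ n → 0 < n ∧ ∀ τ : ℝ,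
      n * τ ≤ n * G + Real.sqrt n * B →
      prHjM M α n P k (fun xs y => GJS (empDist (xs l)) (empDist y) α ≤ τ) ≤ L / Real.sqrt n := by
  set u := iDens1 (P l) (P k) α with hu
  set v := iDens2 (P l) (P k) α with hv
  set gap := GJS (P l) (P k) α - G with hgap
  have hg : 0 < gap := by linarith
  set W := α * varD (P l) u + varD (P k) v with hW
  have hv1 := varD_nonneg (hP l) u
  have hv2 := varD_nonneg (hP k) v
  have hW0 : 0 ≤ W := by positivity
  refine ⟨4 * W / gap ^ 2, by positivity, ⌈(2 * |B| / gap) ^ 2⌉₊ + 1, fun n hn => ?_⟩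
  have hnpos : 0 < n := by omega
  refine ⟨hnpos, fun τ hτ => (gjs_to_gg hα hnpos hP l k τ).trans ?_⟩
  have hnR : (1 : ℝ) ≤ n := by exact_mod_cast hnpos
  have hcast : ((⌈(2 * |B| / gap) ^ 2⌉₊ + 1 : ℕ) : ℝ) ≤ n := by exact_mod_cast hn
  push_cast at hcast
  have hc1 := Nat.le_ceil ((2 * |B| / gap) ^ 2)
  have hqB : 2 * |B| / gap ≤ Real.sqrt n := Real.le_sqrt_of_sq_le (by linarith)
  rw [div_le_iff₀ hg] at hqB
  have hq1 : 1 ≤ Real.sqrt n := Real.one_le_sqrt.2 hnR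
  have hqq : Real.sqrt n * Real.sqrt n = n := Real.mul_self_sqrt (by positivity)
  set q := Real.sqrt n with hq
  obtain ⟨hc0, hc1', hcN, d, hd0, hd1, hcc⟩ := c_facts hα hnpos
  set c := α * n / trainLen α n with hc
  have hqb2 : q * B ≤ n * gap / 2 := by
    have : B ≤ q * gap / 2 := by linarith [le_abs_self B]
    have := mul_le_mul_of_nonneg_left this (by linarith : 0 ≤ q)
    rw [← hqq]; linarith
  have hch := cheb (pp_dist (trainLen α n) n hP k) (gg (trainLen α n) n l c u v) _
    (n * gap / 2) (gg_mean P k l c u v).symm (by positivity)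
  rw [gg_var, hcN] at hch
  refine (PR_mono (pp_dist _ _ hP k) fun z hz => hz.trans ?_).trans (hch.trans ?_)
  swap
  · have := GJS_expect (P l) (P k) α
    rw [← hu, ← hv] at this
    have e : α * n * expect (P l) u + n * expect (P k) v = n * GJS (P l) (P k) α := by
      rw [this]; ring
    rw [e]
    have : (n:ℝ) * gap = n * GJS (P l) (P k) α - n * G := by rw [hgap]; ring
    linarith
  · rw [hcc, div_div, div_le_div_iff₀ (by positivity) (by positivity)]
    have hle : (α * n - d) * varD (P l) u + n * varD (P k) v ≤ n * W := by
      rw [hW]; nlinarith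
    have hqn : q ≤ n := by nlinarith
    calc ((α * n - d) * varD (P l) u + n * varD (P k) v) * (gap ^ 2 * q)
        ≤ (n * W) * (gap ^ 2 * q) := mul_le_mul_of_nonneg_right hle (by positivity)
      _ ≤ (n * W) * (gap ^ 2 * n) := by gcongr
      _ = 4 * W * (n * gap / 2) ^ 2 := by ring

lemma ach_one {M : ℕ} {α : ℝ} (hα : 0 < α) {P : Fin M → X → ℝ} (hP : ∀ i, IsDist (P i))
    (i k : Fin M) (e L : ℝ) (hV : 0 < disp (P i) (P k) α)
    (he : e ∈ Set.Ioo (0 : ℝ) 1) (hL : 0 ≤ L) :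
    ∃ C : ℝ, 0 ≤ C ∧ ∃ n0 : ℕ, ∀ n : ℕ, n0 ≤ n → 0 < n ∧ ∀ τ : ℝ,
      n * τ ≤ n * GJS (P i) (P k) α +
        Real.sqrt n * (Real.sqrt (disp (P i) (P k) α) * stdCDFInv e) - C →
      prHjM M α n P k (fun xs y => GJS (empDist (xs i)) (empDist y) α ≤ τ) ≤
        e - L / Real.sqrt n := by
  set u := iDens1 (P i) (P k) α with hu
  set v := iDens2 (P i) (P k) α with hv
  obtain ⟨C, hC, n0, h⟩ := asym2 hP i k u v _ e L hV he hL
  refine ⟨C, hC, n0, fun n hn => ⟨(h n hn).1, fun τ hτ => ?_⟩⟩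
  have hnpos := (h n hn).1
  refine (gjs_to_gg hα hnpos hP i k τ).trans ?_
  have hv1 := varD_nonneg (hP i) u
  obtain ⟨hc0, hc1', hcN, d, hd0, hd1, hcc⟩ := c_facts hα hnpos
  have h2 := ((h n hn).2 (trainLen α n) _ hc0 hc1' ?_).1
  · refine (PR_mono (pp_dist _ _ hP k) fun z hz => hz.trans ?_).trans h2
    rw [hcN]
    have := GJS_expect (P i) (P k) α
    rw [← hu, ← hv] at this
    rw [this] at hτ
    linarith
  · rw [hcc]
    have e1 : (α * n - d) * varD (P i) u + n * varD (P k) v - n * disp (P i) (P k) α =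
        -(d * varD (P i) u) := by
      unfold disp; rw [← hu, ← hv]; ring
    rw [e1, abs_neg, abs_of_nonneg (mul_nonneg hd0 hv1)]
    nlinarith

lemma ach_all {M : ℕ} {α : ℝ} (hα : 0 < α) {P : Fin M → X → ℝ} (hP : ∀ i, IsDist (P i))
    (i k : Fin M) (hik : i ≠ k) (e : ℝ) (hV : 0 < disp (P i) (P k) α)
    (hmin : ∀ l, l ≠ k → l ≠ i → GJS (P i) (P k) α < GJS (P l) (P k) α)
    (he : e ∈ Set.Ioo (0 : ℝ) 1) :
    ∃ C : ℝ, 0 ≤ C ∧ ∃ n0 : ℕ, ∀ n : ℕ, n0 ≤ n → ∀ τ : ℝ,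
      n * τ ≤ n * GJS (P i) (P k) α +
        Real.sqrt n * (Real.sqrt (disp (P i) (P k) α) * stdCDFInv e) - C →
      prHjM M α n P k (fun xs y => ∃ l, l ≠ k ∧ GJS (empDist (xs l)) (empDist y) α ≤ τ) ≤ e := by
  classical
  set G := GJS (P i) (P k) α with hG
  set B := Real.sqrt (disp (P i) (P k) α) * stdCDFInv e with hB
  have key : ∀ l : Fin M, ∃ L : ℝ, 0 ≤ L ∧ ∃ n0 : ℕ, ∀ n : ℕ, n0 ≤ n → l ≠ k → l ≠ i →
      ∀ τ : ℝ, n * τ ≤ n * G + Real.sqrt n * B →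
      prHjM M α n P k (fun xs y => GJS (empDist (xs l)) (empDist y) α ≤ τ) ≤ L / Real.sqrt n := by
    intro l
    by_cases h : l ≠ k ∧ l ≠ i
    · obtain ⟨L, hL, n0, hh⟩ := cheb_one hα hP l k G B (hmin l h.1 h.2)
      exact ⟨L, hL, n0, fun n hn _ _ => (hh n hn).2⟩
    · exact ⟨0, le_rfl, 0, fun n _ h1 h2 => absurd ⟨h1, h2⟩ h⟩
  choose L hL n0 hn0 using key
  obtain ⟨C, hC, n1, h1⟩ := ach_one hα hP i k e (∑ l, L l) hV he
    (Finset.sum_nonneg fun l _ => hL l)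
  refine ⟨C, hC, n1 + ∑ l, n0 l, fun n hn τ hτ => ?_⟩
  have hn0' : ∀ l, n0 l ≤ n := fun l => by
    have := Finset.single_le_sum (f := n0) (fun _ _ => Nat.zero_le _) (Finset.mem_univ l)
    omega
  have hi := (h1 n (by omega)).2 τ hτ
  set s : Finset (Fin M) := Finset.univ.filter (fun l => l ≠ k) with hs
  have hun : prHjM M α n P k
      (fun xs y => ∃ l, l ≠ k ∧ GJS (empDist (xs l)) (empDist y) α ≤ τ) ≤
      ∑ l ∈ s, prHjM M α n P k (fun xs y => GJS (empDist (xs l)) (empDist y) α ≤ τ) := by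
    simp only [prHjM_eq]
    refine le_trans (PR_mono (pp_dist _ _ hP k) ?_)
      (PR_exists s (pp_dist (trainLen α n) n hP k) (fun l z => GJS
        (empDist fun t => z (Sum.inl (l, t))) (empDist fun t => z (Sum.inr t)) α ≤ τ))
    rintro z ⟨l, hl, h⟩
    exact ⟨l, by simp [hs, hl], h⟩
  refine hun.trans ?_
  rw [← Finset.add_sum_erase s _ (show i ∈ s by simp [hs, hik])]
  have hrest : ∑ l ∈ s.erase i,
      prHjM M α n P k (fun xs y => GJS (empDist (xs l)) (empDist y) α ≤ τ) ≤
      (∑ l, L l) / Real.sqrt n := by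
    rw [Finset.sum_div]
    refine (Finset.sum_le_sum fun l hl => ?_).trans
      (Finset.sum_le_sum_of_subset_of_nonneg (Finset.subset_univ (s.erase i))
        fun l _ _ => div_nonneg (hL l) (Real.sqrt_nonneg _))
    rw [Finset.mem_erase] at hl
    exact hn0 l n (hn0' l) (Finset.mem_filter.1 hl.2).2 hl.1 τ (by linarith)
  linarith


lemma conv_upper {M : ℕ} {α : ℝ} (hα : 0 < α) (ε : Fin M → ℝ) {P : Fin M → X → ℝ}
    (hP : ∀ i, IsDist (P i))
    (i j : Fin M) (hij : i ≠ j) (hne : P i ≠ P j) (hV : 0 < disp (P i) (P j) α)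
    (he : ε j ∈ Set.Ioo (0 : ℝ) 1) :
    ∃ C : ℝ, 0 ≤ C ∧ ∃ n0 : ℕ, ∀ n : ℕ, n0 ≤ n → 0 < n ∧
      0 ≤ n * GJS (P i) (P j) α +
        Real.sqrt n * (Real.sqrt (disp (P i) (P j) α) * stdCDFInv (ε j)) + C ∧
      ∀ lam : ℝ, (∃ ψ : MTest X M α n,
        (∀ Q : Fin M → X → ℝ, (∀ i, IsDist (Q i)) → ∀ j,
          betaM ψ Q j ≤ Real.exp (-((n : ℝ) * lam))) ∧
        (∀ j, zetaM ψ P j ≤ ε j)) →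
      n * lam ≤ n * GJS (P i) (P j) α +
        Real.sqrt n * (Real.sqrt (disp (P i) (P j) α) * stdCDFInv (ε j)) + C + Real.log n := by
  have hG := GJS_pos hα (hP i) (hP j) hne
  obtain ⟨C, hC, n0, h⟩ := conv_low hα hP i j (ε j) 3 hV he (by norm_num)
  set G := GJS (P i) (P j) α with hGdef
  set B := Real.sqrt (disp (P i) (P j) α) * stdCDFInv (ε j) with hB
  refine ⟨C, hC, n0 + ⌈(|B| / G) ^ 2⌉₊, fun n hn => ?_⟩
  obtain ⟨hnpos, h2⟩ := h n (by omega)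
  have hnR : (1 : ℝ) ≤ n := by exact_mod_cast hnpos
  have hc1 := Nat.le_ceil ((|B| / G) ^ 2)
  have hcast : ((⌈(|B| / G) ^ 2⌉₊ : ℕ) : ℝ) ≤ n := by
    exact_mod_cast (by omega : ⌈(|B| / G) ^ 2⌉₊ ≤ n)
  have hqB : |B| / G ≤ Real.sqrt n := Real.le_sqrt_of_sq_le (by linarith)
  rw [div_le_iff₀ hG] at hqB
  have hq1 : 1 ≤ Real.sqrt n := Real.one_le_sqrt.2 hnR
  have hqq : Real.sqrt n * Real.sqrt n = n := Real.mul_self_sqrt (by positivity)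
  rw [mul_assoc (Real.sqrt n), ← hB] at h2
  set q := Real.sqrt n with hq
  have hγ : 0 ≤ n * G + q * B + C := by
    have h3 : 0 ≤ q * G + B := by linarith [neg_abs_le B]
    have h4 := mul_nonneg (by linarith : 0 ≤ q) h3
    have h5 : q * (q * G + B) = n * G + q * B := by rw [← hqq]; ring
    linarith
  refine ⟨hnpos, hγ, ?_⟩
  rintro lam ⟨ψ, hβ, hζ⟩
  by_contra hcon
  push Not at hcon
  have h3 := converse_step M hα n lam (n * G + q * B + C) hP i j hij (ε j) ψ hβ (hζ j)
  have hn0 : (0:ℝ) < n := by linarith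
  have hexp : Real.exp (-Real.log n) = 1 / n := by
    rw [Real.exp_neg, Real.exp_log hn0, one_div]
  have e1 : Real.exp (-((n : ℝ) * lam)) ≤ 1 / n := by
    rw [← hexp]; exact Real.exp_le_exp.2 (by linarith)
  have e2 : Real.exp (n * G + q * B + C) * Real.exp (-((n : ℝ) * lam)) ≤ 1 / n := by
    rw [← hexp, ← Real.exp_add]; exact Real.exp_le_exp.2 (by linarith)
  have e3 : (1:ℝ) / n ≤ 1 / q := one_div_le_one_div_of_le (by linarith) (by nlinarith)
  have e4 : (3:ℝ) / q = 3 * (1 / q) := by ring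
  have e5 : 0 < 1 / q := by positivity
  linarith

lemma target_le (G B G' B' : ℝ) (h1 : G ≤ G') (h2 : G' = G → B ≤ B') :
    ∃ n0 : ℕ, ∀ n : ℕ, n0 ≤ n → n * G + Real.sqrt n * B ≤ n * G' + Real.sqrt n * B' := by
  rcases h1.eq_or_lt with h | h
  · refine ⟨0, fun n _ => ?_⟩
    have := mul_le_mul_of_nonneg_left (h2 h.symm) (Real.sqrt_nonneg n)
    rw [h]; linarith
  · refine ⟨⌈(|B - B'| / (G' - G)) ^ 2⌉₊, fun n hn => ?_⟩
    have hg : 0 < G' - G := by linarith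
    have hc1 := Nat.le_ceil ((|B - B'| / (G' - G)) ^ 2)
    have hcast : ((⌈(|B - B'| / (G' - G)) ^ 2⌉₊ : ℕ) : ℝ) ≤ n := by exact_mod_cast hn
    have hqB : |B - B'| / (G' - G) ≤ Real.sqrt n := Real.le_sqrt_of_sq_le (by linarith)
    rw [div_le_iff₀ hg] at hqB
    have hqq : Real.sqrt n * Real.sqrt n = n := Real.mul_self_sqrt (by positivity)
    have h3 : 0 ≤ Real.sqrt n * (G' - G) - (B - B') := by linarith [le_abs_self (B - B')]
    have h4 := mul_nonneg (Real.sqrt_nonneg n) h3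
    have h5 : Real.sqrt n * (Real.sqrt n * (G' - G) - (B - B')) =
        (Real.sqrt n * Real.sqrt n) * (G' - G) - Real.sqrt n * (B - B') := by ring
    rw [h5, hqq] at h4
    linarith

lemma ach_test {M : ℕ} [NeZero M] {α : ℝ} (hα : 0 < α)
    (ε : Fin M → ℝ) (hε : ∀ j, ε j ∈ Set.Ioo (0 : ℝ) 1)
    (P : Fin M → X → ℝ) (hP : ∀ i, IsDist (P i))
    (ι : Fin M → Fin M) (hι : ∀ j, ι j ≠ j)
    (hmin : ∀ j k : Fin M, k ≠ j → k ≠ ι j →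
      GJS (P (ι j)) (P j) α < GJS (P k) (P j) α)
    (hV : ∀ j, 0 < disp (P (ι j)) (P j) α)
    (j : Fin M)
    (hJ1 : ∀ k : Fin M, GJS (P (ι j)) (P j) α ≤ GJS (P (ι k)) (P k) α)
    (hJ2 : ∀ k : Fin M, GJS (P (ι k)) (P k) α = GJS (P (ι j)) (P j) α →
      Real.sqrt (disp (P (ι j)) (P j) α) * stdCDFInv (ε j) ≤
        Real.sqrt (disp (P (ι k)) (P k) α) * stdCDFInv (ε k)) :
    ∃ C : ℝ, 0 ≤ C ∧ ∃ n0 : ℕ, ∀ n : ℕ, n0 ≤ n → ∀ τ : ℝ,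
      n * τ ≤ n * GJS (P (ι j)) (P j) α +
        Real.sqrt n * (Real.sqrt (disp (P (ι j)) (P j) α) * stdCDFInv (ε j)) - C →
      ∀ k, zetaM (gutmanM M α τ n) P k ≤ ε k := by
  have key := fun k => ach_all hα hP (ι k) k (hι k) (ε k) (hV k) (hmin k) (hε k)
  have key2 := fun k => target_le _ _ _ _ (hJ1 k) (hJ2 k)
  choose C hC n0 h0 using key
  choose n1 h1 using key2
  refine ⟨∑ k, C k, Finset.sum_nonneg fun k _ => hC k, ∑ k, n0 k + ∑ k, n1 k,
    fun n hn τ hτ k => ?_⟩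
  have a1 := Finset.single_le_sum (f := n0) (fun _ _ => Nat.zero_le _) (Finset.mem_univ k)
  have a2 := Finset.single_le_sum (f := n1) (fun _ _ => Nat.zero_le _) (Finset.mem_univ k)
  have a3 := Finset.single_le_sum (f := C) (fun k _ => hC k) (Finset.mem_univ k)
  have b1 := h1 k n (by omega)
  exact (gutman_rej M α τ n hP k).trans (h0 k n (by omega) τ (by linarith))

lemma log_terms {α : ℝ} (hα : 0 < α) {n : ℕ} (hn : 3 ≤ n) :
    1 ≤ Real.log n ∧
    Real.log (((trainLen α n : ℝ) + 1) * ((n : ℝ) + 1)) ≤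
      (|Real.log (2 * (α + 2))| + 2) * Real.log n := by
  have hnR : (3 : ℝ) ≤ n := by exact_mod_cast hn
  have hl : 1 ≤ Real.log n := by
    rw [Real.le_log_iff_exp_le (by linarith)]
    have := Real.exp_one_lt_d9
    linarith
  refine ⟨hl, ?_⟩
  have hN2 := trainLen_lt hα n
  have hN0 : (0:ℝ) ≤ trainLen α n := by positivity
  have h1 : ((trainLen α n : ℝ) + 1) * ((n : ℝ) + 1) ≤ (2 * (α + 2)) * (n * n) := by
    have x1 : (trainLen α n : ℝ) + 1 ≤ (α + 2) * n := by nlinarith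
    have x2 : (n : ℝ) + 1 ≤ 2 * n := by linarith
    calc _ ≤ ((α + 2) * n) * (2 * n) := by gcongr
      _ = _ := by ring
  have h2 := Real.log_le_log (by positivity) h1
  rw [Real.log_mul (x := 2 * (α + 2)) (by positivity) (by positivity),
    Real.log_mul (x := (n : ℝ)) (by positivity) (by positivity)] at h2
  have h3 := le_abs_self (Real.log (2 * (α + 2)))
  have h4 := abs_nonneg (Real.log (2 * (α + 2)))
  nlinarith

/-- Theorem 3 of the paper: second-order asymptotics of M-ary
classification with rejection. Here `ι j = i*(j)` is the unique minimizer of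
`i ↦ GJS(P_i, P_j, α)` over `i ≠ j`; `hJ1` states `j ∈ J₁(P,α)` and `hJ2` states
`j ∈ J₂(P,α)`. -/
theorem lamStarM_second_order {X : Type*} [Fintype X] [DecidableEq X]
    (M : ℕ) (α : ℝ) (hα : 0 < α)
    (ε : Fin M → ℝ) (hε : ∀ j, ε j ∈ Set.Ioo (0 : ℝ) 1)
    (P : Fin M → X → ℝ) (hP : ∀ i, IsDist (P i))
    (hdist : ∀ i k : Fin M, i ≠ k → P i ≠ P k)
    (ι : Fin M → Fin M) (hι : ∀ j, ι j ≠ j)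
    (hmin : ∀ j k : Fin M, k ≠ j → k ≠ ι j →
      GJS (P (ι j)) (P j) α < GJS (P k) (P j) α)
    (hV : ∀ j, 0 < disp (P (ι j)) (P j) α)
    (j : Fin M)
    (hJ1 : ∀ k : Fin M, GJS (P (ι j)) (P j) α ≤ GJS (P (ι k)) (P k) α)
    (hJ2 : ∀ k : Fin M, GJS (P (ι k)) (P k) α = GJS (P (ι j)) (P j) α →
      Real.sqrt (disp (P (ι j)) (P j) α) * stdCDFInv (ε j) ≤
        Real.sqrt (disp (P (ι k)) (P k) α) * stdCDFInv (ε k)) :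
    ∃ C > (0 : ℝ), ∃ n0 : ℕ, ∀ n ≥ n0,
      |lamStarM M α n ε P - GJS (P (ι j)) (P j) α -
        Real.sqrt (disp (P (ι j)) (P j) α / n) * stdCDFInv (ε j)| ≤
          C * Real.log n / n := by
  haveI : NeZero M := ⟨fun h => by subst h; exact j.elim0⟩
  obtain ⟨C1, hC1, n1, h1⟩ := conv_upper hα ε hP (ι j) j (hι j) (hdist _ _ (hι j)) (hV j) (hε j)
  obtain ⟨C2, hC2, n2, h2⟩ := ach_test hα ε hε P hP ι hι hmin hV j hJ1 hJ2
  set G := GJS (P (ι j)) (P j) α with hG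
  set V := disp (P (ι j)) (P j) α with hVd
  set b := stdCDFInv (ε j) with hb
  set K := |Real.log (2 * (α + 2))| + 2 with hK
  have hK0 : 0 ≤ K := by positivity
  set d : ℝ := (Fintype.card X : ℝ) with hd
  have hd0 : 0 ≤ d := by positivity
  refine ⟨C1 + C2 + d * K + 1, by positivity, n1 + n2 + 3, fun n hn => ?_⟩
  obtain ⟨hnpos, hγ, h1⟩ := h1 n (by omega)
  have h2 := h2 n (by omega)
  obtain ⟨hl, hlog⟩ := log_terms hα (n := n) (by omega)
  have hn0 : (0:ℝ) < n := by exact_mod_cast hnpos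
  have hqq : Real.sqrt n * Real.sqrt n = n := Real.mul_self_sqrt hn0.le
  have hq0 : 0 < Real.sqrt n := Real.sqrt_pos.2 hn0
  have hsd : Real.sqrt (V / n) = Real.sqrt V / Real.sqrt n := Real.sqrt_div (hV j).le _
  set q := Real.sqrt n with hq
  have hnB : n * (Real.sqrt (V / n) * b) = q * (Real.sqrt V * b) := by
    rw [hsd, ← hqq]; field_simp
  have hmono : ∀ a : ℝ, 0 ≤ a → a ≤ a * Real.log n := fun a ha => by nlinarith
  have hCl1 := hmono C1 hC1
  have hCl2 := hmono C2 hC2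
  have hl0 : 0 ≤ Real.log n := by linarith
  have up : n * lamStarM M α n ε P ≤ n * G + q * (Real.sqrt V * b) + C1 + Real.log n := by
    rw [mul_comm, ← le_div_iff₀ hn0]
    refine Real.sSup_le ?_ (div_nonneg (by linarith) hn0.le)
    rintro lam ⟨_, hlam⟩
    rw [le_div_iff₀ hn0, mul_comm]
    exact h1 lam hlam
  have low : n * G + q * (Real.sqrt V * b) - C2 - d * (K * Real.log n) ≤
      n * lamStarM M α n ε P := by
    rw [mul_comm _ (lamStarM M α n ε P), ← div_le_iff₀ hn0]
    set lam := (n * G + q * (Real.sqrt V * b) - C2 - d * (K * Real.log n)) / n with hlam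
    by_cases hneg : 0 ≤ lam
    swap
    · push Not at hneg
      exact hneg.le.trans (Real.sSup_nonneg fun x hx => hx.1)
    have hnlam : n * lam = n * G + q * (Real.sqrt V * b) - C2 - d * (K * Real.log n) := by
      rw [hlam]; field_simp
    refine le_csSup ⟨(n * G + q * (Real.sqrt V * b) + C1 + Real.log n) / n, ?_⟩ ⟨hneg, ?_⟩
    · rintro l ⟨_, hl'⟩
      rw [le_div_iff₀ hn0, mul_comm]
      exact h1 l hl'
    set τ := (n * G + q * (Real.sqrt V * b) - C2) / n with hτ
    have hnτ : n * τ = n * G + q * (Real.sqrt V * b) - C2 := by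
      rw [hτ]; field_simp
    refine ⟨gutmanM M α τ n, fun Q hQ k => ?_, h2 τ hnτ.le⟩
    refine (gutman_err M hα τ hnpos hQ k).trans ?_
    have hpos : (0:ℝ) < ((trainLen α n : ℝ) + 1) * ((n : ℝ) + 1) := by positivity
    have e1 : ((trainLen α n : ℝ) + 1) ^ (Fintype.card X) * ((n : ℝ) + 1) ^ (Fintype.card X) =
        Real.exp (d * Real.log (((trainLen α n : ℝ) + 1) * ((n : ℝ) + 1))) := by
      rw [← mul_pow, hd, ← Real.log_pow, Real.exp_log (pow_pos hpos _)]
    rw [e1, ← Real.exp_add]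
    apply Real.exp_le_exp.2
    have := mul_le_mul_of_nonneg_left hlog hd0
    linarith
  have e : lamStarM M α n ε P - G - Real.sqrt (V / n) * b =
      (n * lamStarM M α n ε P - n * G - q * (Real.sqrt V * b)) / n := by
    rw [← hnB]; field_simp
  rw [e, abs_div, abs_of_pos hn0]
  refine div_le_div_of_nonneg_right ?_ hn0.le
  have hdK : 0 ≤ d * K := by positivity
  have hdKl : 0 ≤ d * K * Real.log n := by positivity
  have ex : (C1 + C2 + d * K + 1) * Real.log n =
    C1 * Real.log n + C2 * Real.log n + d * K * Real.log n + Real.log n := by ring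
  have ex2 : d * (K * Real.log n) = d * K * Real.log n := by ring
  rw [ex, abs_le]
  constructor <;> linarith

end Classification
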